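/- arXiv:1302.4219 — 2 statements merged into one kernel-verified Lean document; each statement's English description precedes it below -/
import Mathlib

section
/- Every non-star tree T on at least 4 vertices admits an embedding into its complement such that the image is contained in T^6: there exists a fixed-point-free permutation σ of V(T) with σ*(E(T)) ∩ E(T) = ∅ and dist_T(σ(u),σ(v)) ≤ 6 for every edge uv of T. -/
open SimpleGraph

/-- A non-star tree: a tree in which no vertex is adjacent to all other vertices. -/
def IsNonStarTree {V : Type*} (G : SimpleGraph V) : Prop :=
  G.IsTree ∧ ¬ ∃ v, ∀ w, w ≠ v → G.Adj v w

/-!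
Call the part of a tree beyond an edge `cd`, seen from `c`, the branch at `c` towards `d`.

If all branches at some vertex `c` are stars, a placement is built by attaching them to `c` one at a
time: a permutation of the new branch is put next to the placement found so far, and then the images
of `c` and of a suitable vertex `e` of the branch are exchanged. A branch that is a star centred at
the neighbour of `c` can only be completed in this way if `c` has already been moved, so the other
branches come first; if there are none, `c` is first moved by choosing for `e` a leaf of the branch.
Throughout, vertices move by at most `3` and `c` by at most `2`, and since the tree lies within
distance `3` of `c`, images of edges have length at most `6`.

If some branch is not a star, take a minimal such branch, at `d` towards `c` say. By minimality, all
branches at `c` except possibly the one towards `d` are stars. If that one is a star as well, the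
whole tree is of the kind above. Otherwise cut the edge `cd`: the part containing `c` is of the kind
above, the part containing `d` is placed by induction, and as `d` is moved within its part the image
of `cd` is not an edge. The ends of this image have distance at most `3 + 1 + 2 = 6`.
-/

section Trees

variable {V : Type*} {G : SimpleGraph V} {S L X : Finset V} {c d e u v w x : V}
  {σ ρ : Equiv.Perm V} {r : ℕ}

section Distance

lemma exists_adj_dist_lt (hG : G.Connected) (h : u ≠ v) :
    ∃ w, G.Adj u w ∧ G.dist w v < G.dist u v := by
  obtain ⟨p, hp⟩ := hG.exists_walk_length_eq_dist u v
  cases p with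
  | nil => exact absurd rfl h
  | cons huw q =>
    refine ⟨_, huw, ?_⟩
    have := dist_le q
    rw [Walk.length_cons] at hp
    lia

lemma exists_isPath_cons_of_dist_lt (hG : G.Connected) (h : G.Adj u w)
    (hlt : G.dist w v < G.dist u v) : ∃ p : G.Walk w v, (Walk.cons h p).IsPath := by
  obtain ⟨p, hp⟩ := hG.exists_walk_length_eq_dist w v
  refine ⟨p, Walk.isPath_of_length_eq_dist _ (le_antisymm ?_ (dist_le _))⟩
  rw [Walk.length_cons, hp]
  exact hlt

lemma eq_of_adj_of_dist_lt (hG : G.IsTree) (hw : G.Adj u w) (hx : G.Adj u x)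
    (hwv : G.dist w v < G.dist u v) (hxv : G.dist x v < G.dist u v) : w = x := by
  obtain ⟨p, hp⟩ := exists_isPath_cons_of_dist_lt hG.connected hw hwv
  obtain ⟨q, hq⟩ := exists_isPath_cons_of_dist_lt hG.connected hx hxv
  simpa using congrArg Walk.snd ((hG.existsUnique_path u v).unique hp hq)

lemma dist_eq_dist_add_one_of_adj_left (hG : G.IsTree) (h : G.Adj u w) (v : V) :
    G.dist u v = G.dist w v + 1 ∨ G.dist w v = G.dist u v + 1 := by
  simpa only [dist_comm (u := v)] using hG.dist_eq_dist_add_one_of_adj v h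

lemma eq_and_eq_of_adj_of_dist_lt (hG : G.IsTree) (hcd : G.Adj c d) (huv : G.Adj u v)
    (hu : ¬ G.dist d u < G.dist c u) (hv : G.dist d v < G.dist c v) : u = c ∧ v = d := by
  have hcd_u := dist_eq_dist_add_one_of_adj_left hG hcd u
  have hcd_v := dist_eq_dist_add_one_of_adj_left hG hcd v
  have huv_c := hG.dist_eq_dist_add_one_of_adj c huv
  have huv_d := hG.dist_eq_dist_add_one_of_adj d huv
  have hvd : v = d := by
    by_contra hne
    obtain ⟨w, hvw, hwd⟩ := exists_adj_dist_lt hG.connected hne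
    have hwc : G.dist w c < G.dist v c := by
      have := dist_eq_dist_add_one_of_adj_left hG hcd w
      simp only [dist_comm (v := c), dist_comm (v := d)] at *
      lia
    have hwu : w = u := by
      refine eq_of_adj_of_dist_lt hG hvw huv.symm hwc ?_
      simp only [dist_comm (v := c)]
      lia
    rw [hwu, dist_comm, dist_comm (u := v)] at hwd
    lia
  subst hvd
  have huc : G.dist c u = 0 := by
    rw [dist_self] at *
    lia
  exact ⟨(hG.connected.dist_eq_zero_iff.1 huc).symm, rfl⟩

end Distance

section Star

/-- `S` spans a star of `G` with centre `x`. -/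
def IsStarAt (G : SimpleGraph V) (S : Finset V) (x : V) : Prop :=
  x ∈ S ∧ ∀ w ∈ S, w ≠ x → G.Adj x w

lemma IsStarAt.dist_le_one (h : IsStarAt G S x) (hv : v ∈ S) : G.dist x v ≤ 1 := by
  by_cases hvx : v = x
  · simp [hvx]
  · exact (dist_eq_one_iff_adj.2 (h.2 v hv hvx)).le

lemma IsStarAt.dist_le_two (hG : G.Connected) (h : IsStarAt G S x) (hu : u ∈ S) (hv : v ∈ S) :
    G.dist u v ≤ 2 := by
  calc G.dist u v ≤ G.dist u x + G.dist x v := hG.dist_triangle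
    _ = G.dist x u + G.dist x v := by rw [dist_comm]
    _ ≤ 1 + 1 := add_le_add (h.dist_le_one hu) (h.dist_le_one hv)

lemma IsStarAt.eq_or_eq_of_adj (hG : G.IsTree) (h : IsStarAt G S x) (hu : u ∈ S) (hv : v ∈ S)
    (huv : G.Adj u v) : u = x ∨ v = x := by
  by_contra! hne
  apply hG.dist_ne_of_adj x huv
  rw [dist_eq_one_iff_adj.2 (h.2 u hu hne.1), dist_eq_one_iff_adj.2 (h.2 v hv hne.2)]

end Star

section Perm

lemma apply_mem_of_forall_notMem (hσ : ∀ v, v ∉ S → σ v = v) (hv : v ∈ S) : σ v ∈ S := by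
  by_contra h
  exact h (by rwa [σ.injective (hσ _ h)])

lemma mul_apply_of_mem_left (hSL : Disjoint S L) (hρ : ∀ v, v ∉ L → ρ v = v) (hv : v ∈ S) :
    (σ * ρ) v = σ v := by
  rw [Equiv.Perm.mul_apply, hρ v (Finset.disjoint_left.1 hSL hv)]

lemma mul_apply_of_mem_right (hSL : Disjoint S L) (hσ : ∀ v, v ∉ S → σ v = v)
    (hρ : ∀ v, v ∉ L → ρ v = v) (hv : v ∈ L) : (σ * ρ) v = ρ v :=
  hσ _ (Finset.disjoint_right.1 hSL (apply_mem_of_forall_notMem hρ hv))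

lemma mul_apply_of_notMem_union [DecidableEq V] (hσ : ∀ v, v ∉ S → σ v = v)
    (hρ : ∀ v, v ∉ L → ρ v = v) (hv : v ∉ S ∪ L) : (σ * ρ) v = v := by
  rw [Finset.notMem_union] at hv
  rw [Equiv.Perm.mul_apply, hρ v hv.2, hσ v hv.1]

lemma exists_perm_apply_ne (hS : S.Nontrivial) :
    ∃ ρ : Equiv.Perm V, (∀ v, v ∉ S → ρ v = v) ∧ ∀ v ∈ S, ρ v ≠ v := by
  obtain ⟨ρ, hcycle, hsupp⟩ := S.countable_toSet.exists_cycleOn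
  exact ⟨ρ, fun v hv => by_contra fun h => hv (hsupp h), fun v hv => hcycle.apply_ne hS hv⟩

end Perm

section Placement

/-- `σ` is a fixed-point-free placement of the forest spanned by `S` into its complement; outside
`S` it is the identity, so that `σ` is a permutation of the ambient vertex set. -/
structure IsPlacement (G : SimpleGraph V) (S : Finset V) (σ : Equiv.Perm V) : Prop where
  apply_eq_self : ∀ v, v ∉ S → σ v = v
  apply_ne : ∀ v ∈ S, σ v ≠ v
  not_adj : ∀ u ∈ S, ∀ v ∈ S, G.Adj u v → ¬ G.Adj (σ u) (σ v)

/-- `σ` satisfies all requirements of `IsPlacement` that do not involve the vertex `c`. -/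
structure IsPlacementAwayFrom (G : SimpleGraph V) (S : Finset V) (c : V) (σ : Equiv.Perm V) :
    Prop where
  apply_eq_self : ∀ v, v ∉ S → σ v = v
  apply_ne : ∀ v ∈ S, v ≠ c → σ v ≠ v
  not_adj : ∀ u ∈ S, ∀ v ∈ S, G.Adj u v → u ≠ c → v ≠ c → ¬ G.Adj (σ u) (σ v)

lemma IsPlacementAwayFrom.isPlacement (hσ : IsPlacementAwayFrom G S c σ) (hc : σ c ≠ c)
    (hadj : ∀ v ∈ S, G.Adj c v → ¬ G.Adj (σ c) (σ v)) : IsPlacement G S σ where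
  apply_eq_self := hσ.apply_eq_self
  apply_ne v hv := by
    by_cases h : v = c
    · rwa [h]
    · exact hσ.apply_ne v hv h
  not_adj u hu v hv huv := by
    by_cases huc : u = c
    · subst huc
      exact hadj v hv huv
    by_cases hvc : v = c
    · subst hvc
      exact fun h => hadj u hu huv.symm h.symm
    exact hσ.not_adj u hu v hv huv huc hvc

/-- A placement of the subtree spanned by `S` that moves vertices by at most `3` and takes the ends
of edges to vertices at distance at most `6`. The bound on vertices serves to combine two such
placements along an edge. -/
structure IsShortPlacement (G : SimpleGraph V) (S : Finset V) (σ : Equiv.Perm V) : Prop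
    extends IsPlacement G S σ where
  dist_apply_le : ∀ v ∈ S, G.dist v (σ v) ≤ 3
  dist_apply_apply_le : ∀ u ∈ S, ∀ v ∈ S, G.Adj u v → G.dist (σ u) (σ v) ≤ 6

lemma IsStarAt.isPlacementAwayFrom (hG : G.IsTree) (hS : IsStarAt G S x)
    (hfix : ∀ v, v ∉ S → ρ v = v) (hne : ∀ v ∈ S, v ≠ x → ρ v ≠ v) :
    IsPlacementAwayFrom G S x ρ where
  apply_eq_self := hfix
  apply_ne := hne
  not_adj u hu v hv huv hux hvx := by
    rcases hS.eq_or_eq_of_adj hG hu hv huv with h | h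
    · exact absurd h hux
    · exact absurd h hvx

lemma IsStarAt.exists_isPlacementAwayFrom (hG : G.IsTree) (hS : IsStarAt G S x) :
    ∃ ρ, IsPlacementAwayFrom G S x ρ := by
  obtain ⟨z, rfl⟩ | hS' := Finset.Nonempty.exists_eq_singleton_or_nontrivial ⟨x, hS.1⟩
  · obtain rfl := Finset.mem_singleton.1 hS.1
    refine ⟨1, hS.isPlacementAwayFrom hG (fun _ _ => rfl) fun v hv hvx => ?_⟩
    exact absurd (Finset.mem_singleton.1 hv) hvx
  · obtain ⟨ρ, hfix, hne⟩ := exists_perm_apply_ne hS'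
    exact ⟨ρ, hS.isPlacementAwayFrom hG hfix fun v hv _ => hne v hv⟩

lemma IsStarAt.exists_isPlacementAwayFrom_apply_eq (hG : G.IsTree) (hS : IsStarAt G S x)
    (hS' : S.Nontrivial) : ∃ ρ, ∃ e ∈ S, e ≠ x ∧ ρ e = x ∧ IsPlacementAwayFrom G S e ρ := by
  obtain ⟨ρ, hfix, hne⟩ := exists_perm_apply_ne hS'
  obtain ⟨e, rfl⟩ := ρ.surjective x
  have he : e ∈ S := by
    by_contra h
    exact h (hfix e h ▸ hS.1)
  refine ⟨ρ, e, he, (hne e he).symm, rfl, hfix, fun v hv _ => hne v hv, ?_⟩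
  intro u hu v hv _ hue hve hadj
  rcases hS.eq_or_eq_of_adj hG (apply_mem_of_forall_notMem hfix hu)
    (apply_mem_of_forall_notMem hfix hv) hadj with h | h
  · exact hue (ρ.injective h)
  · exact hve (ρ.injective h)

lemma IsStarAt.exists_ne_ne_of_not_isStarAt (hS : IsStarAt G S x) (hd : d ∈ S)
    (hd' : ¬ IsStarAt G S d) : ∃ w ∈ S, w ≠ d ∧ w ≠ x := by
  by_contra! h
  refine hd' ⟨hd, fun w hw hwd => ?_⟩
  obtain rfl := h w hw hwd
  exact (hS.2 d hd hwd.symm).symm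

lemma IsStarAt.exists_isPlacementAwayFrom_of_leaf (hG : G.IsTree) (hS : IsStarAt G S x)
    (hd : d ∈ S) (hd' : ¬ IsStarAt G S d) :
    ∃ ρ, ρ x = d ∧ ¬ G.Adj d (ρ d) ∧ IsPlacementAwayFrom G S x ρ := by
  classical
  obtain ⟨w, hw, hwd, hwx⟩ := hS.exists_ne_ne_of_not_isStarAt hd hd'
  have hdx : d ≠ x := fun h => hd' (h ▸ hS)
  have hleaves : (S.erase x).Nontrivial :=
    ⟨d, by simp [hd, hdx], w, by simp [hw, hwx], hwd.symm⟩
  obtain ⟨ρ, hfix, hne⟩ := exists_perm_apply_ne hleaves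
  have hmem : ∀ v ∈ S.erase x, ρ v ∈ S.erase x := fun v hv => apply_mem_of_forall_notMem hfix hv
  -- The centre is inserted just before `d` in the derangement `ρ` of the leaves.
  refine ⟨Equiv.swap x d * ρ, ?_, ?_, hS.isPlacementAwayFrom hG ?_ ?_⟩
  · simp [hfix x]
  · have hρd := hmem d (by simp [hd, hdx])
    have hρd' := hne d (by simp [hd, hdx])
    rw [Finset.mem_erase] at hρd
    rw [Equiv.Perm.mul_apply, Equiv.swap_apply_of_ne_of_ne hρd.1 hρd']
    intro hadj
    rcases hS.eq_or_eq_of_adj hG hd hρd.2 hadj with h | h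
    · exact hdx h
    · exact hρd.1 h
  · intro v hv
    have hvx : v ≠ x := fun h => hv (h ▸ hS.1)
    have hvd : v ≠ d := fun h => hv (h ▸ hd)
    rw [Equiv.Perm.mul_apply, hfix v (by simp [hv]), Equiv.swap_apply_of_ne_of_ne hvx hvd]
  · intro v hv hvx
    have hv' : v ∈ S.erase x := Finset.mem_erase.2 ⟨hvx, hv⟩
    have hρv := hne v hv'
    have hρvx := (Finset.mem_erase.1 (hmem v hv')).1
    rw [Equiv.Perm.mul_apply]
    by_cases hρvd : ρ v = d
    · rw [hρvd, Equiv.swap_apply_right]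
      exact hvx.symm
    · rwa [Equiv.swap_apply_of_ne_of_ne hρvx hρvd]

end Placement

section Attachment

/-- The subtree spanned by `L` is joined to the subtree spanned by `S` by the edge `cd` alone. -/
structure IsAttached (G : SimpleGraph V) (S L : Finset V) (c d : V) : Prop where
  mem_left : c ∈ S
  mem_right : d ∈ L
  adj : G.Adj c d
  disjoint : Disjoint S L
  eq_of_adj : ∀ u ∈ S, ∀ v ∈ L, G.Adj u v → u = c ∧ v = d

variable [DecidableEq V]

lemma IsAttached.forall_adj {p : V → V → Prop} (h : IsAttached G S L c d)
    (hp : ∀ u v, p u v → p v u) (hS : ∀ u ∈ S, ∀ v ∈ S, G.Adj u v → p u v)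
    (hL : ∀ u ∈ L, ∀ v ∈ L, G.Adj u v → p u v) (hcd : p c d) :
    ∀ u ∈ S ∪ L, ∀ v ∈ S ∪ L, G.Adj u v → p u v := by
  intro u hu v hv huv
  rcases Finset.mem_union.1 hu with hu | hu <;> rcases Finset.mem_union.1 hv with hv | hv
  · exact hS u hu v hv huv
  · obtain ⟨rfl, rfl⟩ := h.eq_of_adj u hu v hv huv
    exact hcd
  · obtain ⟨rfl, rfl⟩ := h.eq_of_adj v hv u hu huv.symm
    exact hp _ _ hcd
  · exact hL u hu v hv huv

/-- The union of a permutation `σ` of a set containing `c` and a permutation `ρ` of a disjoint set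
containing `e`, with the images of `c` and `e` exchanged. -/
def joinAt (σ ρ : Equiv.Perm V) (c e : V) : Equiv.Perm V :=
  σ * ρ * Equiv.swap c e

lemma joinAt_apply_left (hSL : Disjoint S L) (hσ : ∀ v, v ∉ S → σ v = v)
    (hρ : ∀ v, v ∉ L → ρ v = v) (he : e ∈ L) : joinAt σ ρ c e c = ρ e := by
  rw [joinAt, Equiv.Perm.mul_apply, Equiv.swap_apply_left, mul_apply_of_mem_right hSL hσ hρ he]

lemma joinAt_apply_right (hSL : Disjoint S L) (hρ : ∀ v, v ∉ L → ρ v = v) (hc : c ∈ S) :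
    joinAt σ ρ c e e = σ c := by
  rw [joinAt, Equiv.Perm.mul_apply, Equiv.swap_apply_right, mul_apply_of_mem_left hSL hρ hc]

lemma joinAt_apply_of_mem_left (hSL : Disjoint S L) (hρ : ∀ v, v ∉ L → ρ v = v) (he : e ∈ L)
    (hv : v ∈ S) (hvc : v ≠ c) : joinAt σ ρ c e v = σ v := by
  rw [joinAt, Equiv.Perm.mul_apply,
    Equiv.swap_apply_of_ne_of_ne hvc (hSL.forall_ne_finset hv he),
    mul_apply_of_mem_left hSL hρ hv]

lemma joinAt_apply_of_mem_right (hSL : Disjoint S L) (hσ : ∀ v, v ∉ S → σ v = v)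
    (hρ : ∀ v, v ∉ L → ρ v = v) (hc : c ∈ S) (hv : v ∈ L) (hve : v ≠ e) :
    joinAt σ ρ c e v = ρ v := by
  rw [joinAt, Equiv.Perm.mul_apply,
    Equiv.swap_apply_of_ne_of_ne (hSL.forall_ne_finset hc hv).symm hve,
    mul_apply_of_mem_right hSL hσ hρ hv]

lemma joinAt_apply_of_notMem_union (hσ : ∀ v, v ∉ S → σ v = v) (hρ : ∀ v, v ∉ L → ρ v = v)
    (hc : c ∈ S) (he : e ∈ L) (hv : v ∉ S ∪ L) : joinAt σ ρ c e v = v := by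
  have hvc : v ≠ c := fun h => hv (Finset.mem_union_left L (h ▸ hc))
  have hve : v ≠ e := fun h => hv (Finset.mem_union_right S (h ▸ he))
  rw [joinAt, Equiv.Perm.mul_apply, Equiv.swap_apply_of_ne_of_ne hvc hve,
    mul_apply_of_notMem_union hσ hρ hv]

lemma IsAttached.not_adj_joinAt (h : IsAttached G S L c d) (hσ : ∀ v, v ∉ S → σ v = v)
    (hρ : ∀ v, v ∉ L → ρ v = v) (hroot : σ c = c → ρ e = d) (hv : v ∈ L) (hve : v ≠ e) :
    ¬ G.Adj (joinAt σ ρ c e e) (joinAt σ ρ c e v) := by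
  rw [joinAt_apply_right h.disjoint hρ h.mem_left,
    joinAt_apply_of_mem_right h.disjoint hσ hρ h.mem_left hv hve]
  intro hadj
  obtain ⟨hσc, hρv⟩ := h.eq_of_adj _ (apply_mem_of_forall_notMem hσ h.mem_left) _
    (apply_mem_of_forall_notMem hρ hv) hadj
  exact hve (ρ.injective (hρv.trans (hroot hσc).symm))

lemma IsAttached.isPlacementAwayFrom_joinAt (h : IsAttached G S L c d)
    (hσ : IsPlacementAwayFrom G S c σ) (hρ : IsPlacementAwayFrom G L e ρ) (he : e ∈ L)
    (hroot : σ c = c → ρ e = d) : IsPlacementAwayFrom G (S ∪ L) c (joinAt σ ρ c e) := by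
  obtain ⟨hσfix, hσne, hσadj⟩ := hσ
  obtain ⟨hρfix, hρne, hρadj⟩ := hρ
  have hleft : ∀ v ∈ S, v ≠ c → joinAt σ ρ c e v = σ v := fun v hv hvc =>
    joinAt_apply_of_mem_left h.disjoint hρfix he hv hvc
  have hright : ∀ v ∈ L, v ≠ e → joinAt σ ρ c e v = ρ v := fun v hv hve =>
    joinAt_apply_of_mem_right h.disjoint hσfix hρfix h.mem_left hv hve
  refine ⟨fun v hv => joinAt_apply_of_notMem_union hσfix hρfix h.mem_left he hv, ?_, ?_⟩
  · intro v hv hvc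
    rcases Finset.mem_union.1 hv with hvS | hvL
    · rw [hleft v hvS hvc]
      exact hσne v hvS hvc
    by_cases hve : v = e
    · rw [hve, joinAt_apply_right h.disjoint hρfix h.mem_left]
      exact h.disjoint.forall_ne_finset (apply_mem_of_forall_notMem hσfix h.mem_left) he
    · rw [hright v hvL hve]
      exact hρne v hvL hve
  · refine h.forall_adj (fun u v huv hv hu hadj => huv hu hv hadj.symm) ?_ ?_
      fun hc => absurd rfl hc
    · intro u hu v hv huv huc hvc
      rw [hleft u hu huc, hleft v hv hvc]
      exact hσadj u hu v hv huv huc hvc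
    · intro u hu v hv huv _ _
      by_cases hue : u = e
      · subst hue
        exact h.not_adj_joinAt hσfix hρfix hroot hv huv.ne'
      by_cases hve : v = e
      · subst hve
        exact fun hadj => h.not_adj_joinAt hσfix hρfix hroot hu hue hadj.symm
      rw [hright u hu hue, hright v hv hve]
      exact hρadj u hu v hv huv hue hve

lemma IsAttached.isPlacement_joinAt (h : IsAttached G S L c d)
    (hσ : IsPlacementAwayFrom G S c σ) (hρ : IsPlacementAwayFrom G L e ρ) (he : e ∈ L)
    (hroot : σ c = c → ρ e = d) (hpre : ∀ v, σ v = c → ¬ G.Adj c v)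
    (hcd : ¬ G.Adj (ρ e) (joinAt σ ρ c e d)) : IsPlacement G (S ∪ L) (joinAt σ ρ c e) := by
  have hρe : ρ e ∈ L := apply_mem_of_forall_notMem hρ.apply_eq_self he
  have hc : joinAt σ ρ c e c = ρ e :=
    joinAt_apply_left h.disjoint hσ.apply_eq_self hρ.apply_eq_self he
  refine (h.isPlacementAwayFrom_joinAt hσ hρ he hroot).isPlacement ?_ ?_
  · rw [hc]
    exact (h.disjoint.forall_ne_finset h.mem_left hρe).symm
  · intro v hv hcv
    rw [hc]
    rcases Finset.mem_union.1 hv with hvS | hvL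
    · rw [joinAt_apply_of_mem_left h.disjoint hρ.apply_eq_self he hvS hcv.ne']
      intro hadj
      have hσv := apply_mem_of_forall_notMem hσ.apply_eq_self hvS
      exact hpre v (h.eq_of_adj _ hσv _ hρe hadj.symm).1 hcv
    · rwa [(h.eq_of_adj c h.mem_left v hvL hcv).2]

end Attachment

section Rooted

/-- A placement of the subtree spanned by `S`, except that its root `c` is allowed to violate the
conditions of `IsPlacement`, which displaces vertices by at most `3` and the root by at most `r`.
It can be extended over further branches at `c`; the last condition ensures that edges at `c` do not
become edges when the image of `c` is moved into such a branch. -/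
structure IsRootedPlacement (G : SimpleGraph V) (S : Finset V) (c : V) (r : ℕ)
    (σ : Equiv.Perm V) : Prop extends IsPlacementAwayFrom G S c σ where
  dist_apply_le : ∀ v ∈ S, G.dist v (σ v) ≤ 3
  dist_root_le : G.dist c (σ c) ≤ r
  not_adj_of_apply_eq_root : ∀ v, σ v = c → ¬ G.Adj c v

lemma IsRootedPlacement.mono {s : ℕ} (hσ : IsRootedPlacement G S c r σ) (h : r ≤ s) :
    IsRootedPlacement G S c s σ :=
  { hσ with dist_root_le := hσ.dist_root_le.trans h }

lemma isRootedPlacement_singleton (G : SimpleGraph V) (c : V) (r : ℕ) :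
    IsRootedPlacement G {c} c r 1 where
  apply_eq_self _ _ := rfl
  apply_ne v hv hvc := absurd (Finset.mem_singleton.1 hv) hvc
  not_adj u hu _ _ _ huc := absurd (Finset.mem_singleton.1 hu) huc
  dist_apply_le v _ := by simp
  dist_root_le := by simp
  not_adj_of_apply_eq_root v hv := by
    rw [Equiv.Perm.one_apply] at hv
    simp [hv]

variable [DecidableEq V]

lemma IsAttached.dist_joinAt_le_three (hG : G.Connected) (h : IsAttached G S L c d)
    (hσ : IsRootedPlacement G S c r σ) (hρ : ∀ v, v ∉ L → ρ v = v) (he : e ∈ L)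
    (hcρ : G.dist c (ρ e) ≤ r) (hce : G.dist c e + r ≤ 3) (hL : ∀ v ∈ L, G.dist v (ρ v) ≤ 3)
    (hv : v ∈ S ∪ L) : G.dist v (joinAt σ ρ c e v) ≤ 3 := by
  by_cases hvc : v = c
  · rw [hvc, joinAt_apply_left h.disjoint hσ.apply_eq_self hρ he]
    lia
  by_cases hve : v = e
  · calc G.dist v (joinAt σ ρ c e v) = G.dist e (σ c) := by
          rw [hve, joinAt_apply_right h.disjoint hρ h.mem_left]
      _ ≤ G.dist e c + G.dist c (σ c) := hG.dist_triangle
      _ ≤ G.dist c e + r := by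
          rw [dist_comm]
          exact Nat.add_le_add_left hσ.dist_root_le _
      _ ≤ 3 := hce
  rcases Finset.mem_union.1 hv with hvS | hvL
  · rw [joinAt_apply_of_mem_left h.disjoint hρ he hvS hvc]
    exact hσ.dist_apply_le v hvS
  · rw [joinAt_apply_of_mem_right h.disjoint hσ.apply_eq_self hρ h.mem_left hvL hve]
    exact hL v hvL

lemma IsAttached.not_adj_of_joinAt_apply_eq (h : IsAttached G S L c d)
    (hσ : IsRootedPlacement G S c r σ) (hρ : ∀ v, v ∉ L → ρ v = v) (he : e ∈ L)
    (hroot : σ c = c → e ≠ d) (hv : joinAt σ ρ c e v = c) : ¬ G.Adj c v := by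
  intro hcv
  by_cases hvS : v ∈ S
  · rw [joinAt_apply_of_mem_left h.disjoint hρ he hvS hcv.ne'] at hv
    exact hσ.not_adj_of_apply_eq_root v hv hcv
  by_cases hvL : v ∈ L
  · by_cases hve : v = e
    · rw [hve, joinAt_apply_right h.disjoint hρ h.mem_left] at hv
      exact hroot hv (hve ▸ (h.eq_of_adj c h.mem_left v hvL hcv).2)
    · rw [joinAt_apply_of_mem_right h.disjoint hσ.apply_eq_self hρ h.mem_left hvL hve] at hv
      exact h.disjoint.forall_ne_finset h.mem_left (apply_mem_of_forall_notMem hρ hvL) hv.symm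
  · rw [joinAt_apply_of_notMem_union hσ.apply_eq_self hρ h.mem_left he (by simp [hvS, hvL])] at hv
    exact hcv.ne hv.symm

lemma IsAttached.isRootedPlacement_joinAt (hG : G.Connected) (h : IsAttached G S L c d)
    (hσ : IsRootedPlacement G S c r σ) (hρ : IsPlacementAwayFrom G L e ρ) (he : e ∈ L)
    (hroot : σ c = c → ρ e = d ∧ e ≠ d) (hcρ : G.dist c (ρ e) ≤ r) (hce : G.dist c e + r ≤ 3)
    (hL : ∀ v ∈ L, G.dist v (ρ v) ≤ 3) : IsRootedPlacement G (S ∪ L) c r (joinAt σ ρ c e) where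
  toIsPlacementAwayFrom :=
    h.isPlacementAwayFrom_joinAt hσ.toIsPlacementAwayFrom hρ he fun hc => (hroot hc).1
  dist_apply_le _ hv := h.dist_joinAt_le_three hG hσ hρ.apply_eq_self he hcρ hce hL hv
  dist_root_le := by rwa [joinAt_apply_left h.disjoint hσ.apply_eq_self hρ.apply_eq_self he]
  not_adj_of_apply_eq_root _ hv :=
    h.not_adj_of_joinAt_apply_eq hσ hρ.apply_eq_self he (fun hc => (hroot hc).2) hv

lemma IsRootedPlacement.exists_isPlacement_of_isStarAt (hG : G.IsTree) (h : IsAttached G S L c d)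
    (hL : IsStarAt G L d) (hσ : IsRootedPlacement G S c 2 σ) (hc : σ c ≠ c) :
    ∃ τ, IsRootedPlacement G (S ∪ L) c 2 τ ∧ IsPlacement G (S ∪ L) τ := by
  obtain ⟨ρ, hρ⟩ := hL.exists_isPlacementAwayFrom hG
  have hρL : ∀ v ∈ L, ρ v ∈ L := fun v hv => apply_mem_of_forall_notMem hρ.apply_eq_self hv
  have hcd : G.dist c d = 1 := dist_eq_one_iff_adj.2 h.adj
  refine ⟨joinAt σ ρ c d, h.isRootedPlacement_joinAt hG.connected hσ hρ h.mem_right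
    (fun h' => absurd h' hc) ?_ (by rw [hcd]) ?_,
    h.isPlacement_joinAt hσ.toIsPlacementAwayFrom hρ h.mem_right (fun h' => absurd h' hc)
    hσ.not_adj_of_apply_eq_root ?_⟩
  · calc G.dist c (ρ d) ≤ G.dist c d + G.dist d (ρ d) := hG.connected.dist_triangle
      _ ≤ 1 + 1 := add_le_add hcd.le (hL.dist_le_one (hρL d h.mem_right))
  · exact fun v hv => (hL.dist_le_two hG.connected hv (hρL v hv)).trans (Nat.le_succ 2)
  · rw [joinAt_apply_right h.disjoint hρ.apply_eq_self h.mem_left]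
    intro hadj
    exact hc (h.eq_of_adj _ (apply_mem_of_forall_notMem hσ.apply_eq_self h.mem_left) _
      (hρL d h.mem_right) hadj.symm).1

lemma IsRootedPlacement.exists_apply_ne_of_isStarAt (hG : G.IsTree) (h : IsAttached G S L c d)
    (hL : IsStarAt G L d) (hL' : L.Nontrivial) (hσ : IsRootedPlacement G S c 1 σ) :
    ∃ τ, IsRootedPlacement G (S ∪ L) c 1 τ ∧ τ c ≠ c := by
  obtain ⟨ρ, e, he, hed, hρe, hρ⟩ := hL.exists_isPlacementAwayFrom_apply_eq hG hL'
  have hcd : G.dist c d = 1 := dist_eq_one_iff_adj.2 h.adj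
  have hde : G.dist d e = 1 := dist_eq_one_iff_adj.2 (hL.2 e he hed)
  refine ⟨joinAt σ ρ c e, h.isRootedPlacement_joinAt hG.connected hσ hρ he
    (fun _ => ⟨hρe, hed⟩) ?_ ?_ ?_, ?_⟩
  · rw [hρe, hcd]
  · have := hG.connected.dist_triangle (u := c) (v := d) (w := e)
    lia
  · exact fun v hv => (hL.dist_le_two hG.connected hv
      (apply_mem_of_forall_notMem hρ.apply_eq_self hv)).trans (Nat.le_succ 2)
  · rw [joinAt_apply_left h.disjoint hσ.apply_eq_self hρ.apply_eq_self he, hρe]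
    exact h.adj.ne'

lemma IsRootedPlacement.exists_isPlacement_of_not_isStarAt (hG : G.IsTree)
    (h : IsAttached G S L c d) (hL : IsStarAt G L x) (hd : ¬ IsStarAt G L d)
    (hσ : IsRootedPlacement G S c 1 σ) :
    ∃ τ, IsRootedPlacement G (S ∪ L) c 1 τ ∧ IsPlacement G (S ∪ L) τ := by
  obtain ⟨ρ, hρx, hρd, hρ⟩ := hL.exists_isPlacementAwayFrom_of_leaf hG h.mem_right hd
  have hdx : d ≠ x := fun h => hd (h ▸ hL)
  have hcd : G.dist c d = 1 := dist_eq_one_iff_adj.2 h.adj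
  have hxd : G.dist d x = 1 := dist_eq_one_iff_adj.2 (hL.2 d h.mem_right hdx).symm
  refine ⟨joinAt σ ρ c x, h.isRootedPlacement_joinAt hG.connected hσ hρ hL.1
    (fun _ => ⟨hρx, hdx.symm⟩) ?_ ?_ ?_,
    h.isPlacement_joinAt hσ.toIsPlacementAwayFrom hρ hL.1 (fun _ => hρx)
    hσ.not_adj_of_apply_eq_root ?_⟩
  · rw [hρx, hcd]
  · have := hG.connected.dist_triangle (u := c) (v := d) (w := x)
    lia
  · exact fun v hv => (hL.dist_le_two hG.connected hv
      (apply_mem_of_forall_notMem hρ.apply_eq_self hv)).trans (Nat.le_succ 2)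
  · rwa [hρx, joinAt_apply_of_mem_right h.disjoint hσ.apply_eq_self hρ.apply_eq_self
      h.mem_left h.mem_right hdx]

end Rooted

section Branch

/-- The finite vertex set `S` spans a subtree: from each of its vertices, the first step towards
any other one stays in `S`. -/
structure IsSubtree (G : SimpleGraph V) (S : Finset V) : Prop where
  nonempty : S.Nonempty
  exists_adj_dist_lt : ∀ u ∈ S, ∀ v ∈ S, u ≠ v → ∃ w ∈ S, G.Adj u w ∧ G.dist w v < G.dist u v

/-- The part of `S` beyond the edge `cd`, seen from `c`. -/
noncomputable def branch (G : SimpleGraph V) (S : Finset V) (c d : V) : Finset V :=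
  {v ∈ S | G.dist d v < G.dist c v}

lemma mem_branch : v ∈ branch G S c d ↔ v ∈ S ∧ G.dist d v < G.dist c v :=
  Finset.mem_filter

lemma mem_branch_self (hd : d ∈ S) (hcd : G.Adj c d) : d ∈ branch G S c d := by
  simp [mem_branch, hd, dist_eq_one_iff_adj.2 hcd]

lemma notMem_branch_root : c ∉ branch G S c d := by
  simp [mem_branch]

lemma eq_of_mem_branch (hG : G.IsTree) (hd : G.Adj c d) (he : G.Adj c e)
    (hvd : v ∈ branch G S c d) (hve : v ∈ branch G S c e) : d = e :=
  eq_of_adj_of_dist_lt hG hd he (mem_branch.1 hvd).2 (mem_branch.1 hve).2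

lemma IsSubtree.exists_mem_branch (hS : IsSubtree G S) (hc : c ∈ S) (hv : v ∈ S) (hvc : v ≠ c) :
    ∃ d ∈ S, G.Adj c d ∧ v ∈ branch G S c d := by
  obtain ⟨d, hd, hcd, hlt⟩ := hS.exists_adj_dist_lt c hc v hv hvc.symm
  exact ⟨d, hd, hcd, mem_branch.2 ⟨hv, hlt⟩⟩

lemma isSubtree_branch (hG : G.IsTree) (hS : IsSubtree G S) (hd : d ∈ S) (hcd : G.Adj c d) :
    IsSubtree G (branch G S c d) where
  nonempty := ⟨d, mem_branch_self hd hcd⟩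
  exists_adj_dist_lt u hu v hv huv := by
    rw [mem_branch] at hu hv
    obtain ⟨w, hw, huw, hwv⟩ := hS.exists_adj_dist_lt u hu.1 v hv.1 huv
    refine ⟨w, mem_branch.2 ⟨hw, ?_⟩, huw, hwv⟩
    by_contra hwd
    obtain ⟨rfl, rfl⟩ := eq_and_eq_of_adj_of_dist_lt hG hcd huw.symm hwd hu.2
    exact hwv.not_gt hv.2

lemma branch_union_branch [DecidableEq V] (hG : G.IsTree) (hcd : G.Adj c d) :
    branch G S d c ∪ branch G S c d = S := by
  ext v
  have := dist_eq_dist_add_one_of_adj_left hG hcd v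
  simp only [Finset.mem_union, mem_branch, ← and_or_left, and_iff_left_iff_imp]
  lia

lemma isAttached_branch (hG : G.IsTree) (hc : c ∈ S) (hd : d ∈ S) (hcd : G.Adj c d) :
    IsAttached G (branch G S d c) (branch G S c d) c d where
  mem_left := mem_branch_self hc hcd.symm
  mem_right := mem_branch_self hd hcd
  adj := hcd
  disjoint := Finset.disjoint_left.2 fun _ hv hv' =>
    (mem_branch.1 hv).2.not_gt (mem_branch.1 hv').2
  eq_of_adj _ hu _ hv huv := eq_and_eq_of_adj_of_dist_lt hG hcd huv (mem_branch.1 hu).2.not_gt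
    (mem_branch.1 hv).2

lemma mem_branch_of_mem_branch_of_ne (hG : G.IsTree) (hdc : G.Adj d c) (hce : G.Adj c e)
    (hed : e ≠ d) (hv : v ∈ branch G S c e) : v ∈ branch G S d c := by
  rw [mem_branch] at hv ⊢
  have := dist_eq_dist_add_one_of_adj_left hG hdc v
  have : ¬ G.dist d v < G.dist c v := fun h => hed (eq_of_adj_of_dist_lt hG hce hdc.symm hv.2 h)
  exact ⟨hv.1, by lia⟩

lemma branch_branch (hG : G.IsTree) (hdc : G.Adj d c) (hce : G.Adj c e) (hed : e ≠ d) :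
    branch G (branch G S d c) c e = branch G S c e := by
  ext v
  refine ⟨fun hv => ?_, fun hv => ?_⟩
  · rw [mem_branch, mem_branch] at hv
    exact mem_branch.2 ⟨hv.1.1, hv.2⟩
  · exact mem_branch.2 ⟨mem_branch_of_mem_branch_of_ne hG hdc hce hed hv, (mem_branch.1 hv).2⟩

lemma branch_ssubset_branch (hG : G.IsTree) (hc : c ∈ S) (hdc : G.Adj d c) (hce : G.Adj c e)
    (hed : e ≠ d) : branch G S c e ⊂ branch G S d c :=
  (Finset.ssubset_iff_of_subset fun _ => mem_branch_of_mem_branch_of_ne hG hdc hce hed).2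
    ⟨c, mem_branch_self hc hdc, notMem_branch_root⟩

end Branch

section Fan

variable [DecidableEq V]

/-- The vertex `c` together with its branches in `S` towards the neighbours in `X`. -/
noncomputable def fan (G : SimpleGraph V) (S : Finset V) (c : V) (X : Finset V) : Finset V :=
  insert c (X.biUnion (branch G S c))

lemma fan_empty : fan G S c ∅ = {c} := by
  simp [fan]

lemma fan_insert : fan G S c (insert d X) = fan G S c X ∪ branch G S c d := by
  rw [fan, fan, Finset.biUnion_insert, Finset.union_comm, Finset.insert_union]

lemma IsSubtree.fan_eq (hS : IsSubtree G S) (hc : c ∈ S) (hX : ∀ d, d ∈ X ↔ d ∈ S ∧ G.Adj c d) :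
    fan G S c X = S := by
  apply Finset.Subset.antisymm
  · refine Finset.insert_subset hc (Finset.biUnion_subset.2 fun _ _ => Finset.filter_subset _ _)
  · intro v hv
    by_cases hvc : v = c
    · exact hvc ▸ Finset.mem_insert_self _ _
    obtain ⟨d, hd, hcd, hvd⟩ := hS.exists_mem_branch hc hv hvc
    exact Finset.mem_insert_of_mem (Finset.mem_biUnion.2 ⟨d, (hX d).2 ⟨hd, hcd⟩, hvd⟩)

lemma isAttached_fan (hG : G.IsTree) (hX : ∀ e ∈ X, G.Adj c e) (hd : d ∈ S) (hcd : G.Adj c d)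
    (hdX : d ∉ X) : IsAttached G (fan G S c X) (branch G S c d) c d := by
  have hdisj : Disjoint (fan G S c X) (branch G S c d) := by
    simp only [fan, Finset.disjoint_insert_left, Finset.disjoint_biUnion_left]
    refine ⟨notMem_branch_root, fun e he => Finset.disjoint_left.2 fun v hve hvd => hdX ?_⟩
    rwa [eq_of_mem_branch hG hcd (hX e he) hvd hve]
  refine ⟨Finset.mem_insert_self _ _, mem_branch_self hd hcd, hcd, hdisj, ?_⟩
  intro u hu v hv huv
  refine eq_and_eq_of_adj_of_dist_lt hG hcd huv (fun hlt => ?_) (mem_branch.1 hv).2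
  rcases Finset.mem_insert.1 hu with rfl | hu'
  · simp at hlt
  · obtain ⟨e, -, hue⟩ := Finset.mem_biUnion.1 hu'
    exact Finset.disjoint_left.1 hdisj hu (mem_branch.2 ⟨(mem_branch.1 hue).1, hlt⟩)

lemma exists_isRootedPlacement_fan (hG : G.IsTree) (hX : ∀ d ∈ X, d ∈ S ∧ G.Adj c d)
    (hstar : ∀ d ∈ X, ∃ x, IsStarAt G (branch G S c d) x)
    (hne : ∀ d ∈ X, ¬ IsStarAt G (branch G S c d) d) :
    ∃ σ, IsRootedPlacement G (fan G S c X) c 1 σ ∧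
      (X.Nonempty → IsPlacement G (fan G S c X) σ) := by
  induction X using Finset.induction_on with
  | empty =>
    refine ⟨1, ?_, fun h => absurd h Finset.not_nonempty_empty⟩
    rw [fan_empty]
    exact isRootedPlacement_singleton G c 1
  | insert d X hdX ih =>
    simp only [Finset.forall_mem_insert] at hX hstar hne
    obtain ⟨σ, hσ, -⟩ := ih hX.2 hstar.2 hne.2
    obtain ⟨x, hx⟩ := hstar.1
    have hd := isAttached_fan hG (fun e he => (hX.2 e he).2) hX.1.1 hX.1.2 hdX
    obtain ⟨τ, hτ, hτ'⟩ := hσ.exists_isPlacement_of_not_isStarAt hG hd hx hne.1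
    rw [fan_insert]
    exact ⟨τ, hτ, fun _ => hτ'⟩

lemma exists_isRootedPlacement_fan_union {Y : Finset V} (hG : G.IsTree)
    (hX : ∀ d ∈ X, G.Adj c d) (hY : ∀ d ∈ Y, d ∈ S ∧ G.Adj c d)
    (hstar : ∀ d ∈ Y, IsStarAt G (branch G S c d) d)
    (hσ : IsRootedPlacement G (fan G S c X) c 2 σ) (hσ' : IsPlacement G (fan G S c X) σ) :
    ∃ τ, IsRootedPlacement G (fan G S c (X ∪ Y)) c 2 τ ∧
      IsPlacement G (fan G S c (X ∪ Y)) τ := by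
  induction Y using Finset.induction_on with
  | empty => exact ⟨σ, by rwa [Finset.union_empty], by rwa [Finset.union_empty]⟩
  | insert d Y _ ih =>
    simp only [Finset.forall_mem_insert] at hY hstar
    obtain ⟨τ, hτ, hτ'⟩ := ih hY.2 hstar.2
    rw [Finset.union_insert]
    by_cases hd : d ∈ X ∪ Y
    · rw [Finset.insert_eq_of_mem hd]
      exact ⟨τ, hτ, hτ'⟩
    have hXY : ∀ e ∈ X ∪ Y, G.Adj c e := fun e he =>
      (Finset.mem_union.1 he).elim (hX e) fun he => (hY.2 e he).2
    rw [fan_insert]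
    exact hτ.exists_isPlacement_of_isStarAt hG (isAttached_fan hG hXY hY.1.1 hY.1.2 hd) hstar.1
      (hτ'.apply_ne c (Finset.mem_insert_self _ _))

end Fan

section StarBranches

lemma IsSubtree.exists_nontrivial_branch (hS : IsSubtree G S) (hc : c ∈ S)
    (h : ¬ IsStarAt G S c) : ∃ d ∈ S, G.Adj c d ∧ (branch G S c d).Nontrivial := by
  have hex : ∃ v ∈ S, v ≠ c ∧ ¬ G.Adj c v := by
    by_contra! h'
    exact h ⟨hc, h'⟩
  obtain ⟨v, hv, hvc, hcv⟩ := hex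
  obtain ⟨d, hd, hcd, hvd⟩ := hS.exists_mem_branch hc hv hvc
  exact ⟨d, hd, hcd, d, mem_branch_self hd hcd, v, hvd, fun hdv => hcv (hdv ▸ hcd)⟩

lemma IsSubtree.exists_adj_ne_of_not_isStarAt (hS : IsSubtree G S) (hc : c ∈ S) (hd : d ∈ S)
    (hcd : G.Adj c d) (hstar : IsStarAt G (branch G S c d) d) (h : ¬ IsStarAt G S d) :
    ∃ e ∈ S, G.Adj c e ∧ e ≠ d := by
  by_contra! hunique
  refine h ⟨hd, fun v hv hvd => ?_⟩
  by_cases hvc : v = c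
  · exact hvc ▸ hcd.symm
  obtain ⟨e, he, hce, hve⟩ := hS.exists_mem_branch hc hv hvc
  rw [hunique e he hce] at hve
  exact hstar.2 v hve hvd

lemma exists_isRootedPlacement_fan_pair [DecidableEq V] (hG : G.IsTree) (hd : d ∈ S)
    (hcd : G.Adj c d) (hdstar : IsStarAt G (branch G S c d) d)
    (hd' : (branch G S c d).Nontrivial) (he : e ∈ S) (hce : G.Adj c e)
    (hestar : IsStarAt G (branch G S c e) e) (hed : e ≠ d) :
    ∃ σ, IsRootedPlacement G (fan G S c {e, d}) c 2 σ ∧ IsPlacement G (fan G S c {e, d}) σ := by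
  have h₀ : IsRootedPlacement G (fan G S c ∅) c 1 1 := by
    rw [fan_empty]
    exact isRootedPlacement_singleton G c 1
  obtain ⟨σ, hσ, hσc⟩ := h₀.exists_apply_ne_of_isStarAt hG
    (isAttached_fan hG (by simp) hd hcd (by simp)) hdstar hd'
  rw [← fan_insert, insert_empty_eq] at hσ
  rw [fan_insert]
  exact (hσ.mono one_le_two).exists_isPlacement_of_isStarAt hG
    (isAttached_fan hG (by simpa using hcd) he hce (by simpa using hed)) hestar hσc

lemma IsSubtree.exists_isRootedPlacement_of_fan [DecidableEq V] (hG : G.IsTree)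
    (hS : IsSubtree G S) (hc : c ∈ S) (hX : ∀ d ∈ X, d ∈ S ∧ G.Adj c d)
    (hstar : ∀ d ∈ S, G.Adj c d → d ∉ X → IsStarAt G (branch G S c d) d)
    (hσ : IsRootedPlacement G (fan G S c X) c 2 σ) (hσ' : IsPlacement G (fan G S c X) σ) :
    ∃ τ, IsRootedPlacement G S c 2 τ ∧ IsPlacement G S τ := by
  classical
  let Y : Finset V := {d ∈ S | G.Adj c d ∧ d ∉ X}
  have hY : ∀ d ∈ Y, d ∈ S ∧ G.Adj c d ∧ d ∉ X := fun d hd => Finset.mem_filter.1 hd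
  have hXY : fan G S c (X ∪ Y) = S := by
    refine hS.fan_eq hc fun d => ?_
    have := hX d
    simp only [Y, Finset.mem_union, Finset.mem_filter]
    tauto
  simpa only [hXY] using exists_isRootedPlacement_fan_union hG (fun d hd => (hX d hd).2)
    (fun d hd => ⟨(hY d hd).1, (hY d hd).2.1⟩)
    (fun d hd => hstar d (hY d hd).1 (hY d hd).2.1 (hY d hd).2.2) hσ hσ'

lemma IsSubtree.exists_isRootedPlacement (hG : G.IsTree) (hS : IsSubtree G S) (hc : c ∈ S)
    (hstar : ∀ d ∈ S, G.Adj c d → ∃ x, IsStarAt G (branch G S c d) x)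
    (hne : ¬ ∃ x, IsStarAt G S x) :
    ∃ σ, IsRootedPlacement G S c 2 σ ∧ IsPlacement G S σ := by
  classical
  let X : Finset V := {d ∈ S | G.Adj c d ∧ ¬ IsStarAt G (branch G S c d) d}
  have hX : ∀ d ∈ X, d ∈ S ∧ G.Adj c d ∧ ¬ IsStarAt G (branch G S c d) d :=
    fun d hd => Finset.mem_filter.1 hd
  have hX' : ∀ d ∈ S, G.Adj c d → d ∉ X → IsStarAt G (branch G S c d) d :=
    fun d hd hcd hdX => by simpa [X, hd, hcd] using hdX
  obtain hXe | hXne := X.eq_empty_or_nonempty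
  · simp only [hXe, Finset.notMem_empty, not_false_eq_true, forall_const] at hX'
    obtain ⟨d, hd, hcd, hd'⟩ := hS.exists_nontrivial_branch hc fun h => hne ⟨c, h⟩
    obtain ⟨e, he, hce, hed⟩ := hS.exists_adj_ne_of_not_isStarAt hc hd hcd (hX' d hd hcd)
      fun h => hne ⟨d, h⟩
    obtain ⟨σ, hσ, hσ'⟩ := exists_isRootedPlacement_fan_pair hG hd hcd (hX' d hd hcd) hd' he hce
      (hX' e he hce) hed
    exact hS.exists_isRootedPlacement_of_fan hG hc (by simp [hd, hcd, he, hce])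
      (fun d hd hcd _ => hX' d hd hcd) hσ hσ'
  · have hXS : ∀ d ∈ X, d ∈ S ∧ G.Adj c d := fun d hd => ⟨(hX d hd).1, (hX d hd).2.1⟩
    obtain ⟨σ, hσ, hσ'⟩ := exists_isRootedPlacement_fan hG hXS
      (fun d hd => hstar d (hX d hd).1 (hX d hd).2.1) fun d hd => (hX d hd).2.2
    exact hS.exists_isRootedPlacement_of_fan hG hc hXS hX' (hσ.mono one_le_two) (hσ' hXne)

lemma IsSubtree.dist_le_three (hG : G.Connected) (hS : IsSubtree G S) (hc : c ∈ S)
    (hstar : ∀ d ∈ S, G.Adj c d → ∃ x, IsStarAt G (branch G S c d) x) (hv : v ∈ S) :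
    G.dist c v ≤ 3 := by
  by_cases hvc : v = c
  · simp [hvc]
  obtain ⟨d, hd, hcd, hvd⟩ := hS.exists_mem_branch hc hv hvc
  obtain ⟨x, hx⟩ := hstar d hd hcd
  calc G.dist c v ≤ G.dist c d + G.dist d v := hG.dist_triangle
    _ ≤ 1 + 2 := add_le_add (dist_eq_one_iff_adj.2 hcd).le
      (hx.dist_le_two hG (mem_branch_self hd hcd) hvd)

lemma IsSubtree.exists_isShortPlacement_of_isStarAt_branch (hG : G.IsTree) (hS : IsSubtree G S)
    (hc : c ∈ S) (hstar : ∀ d ∈ S, G.Adj c d → ∃ x, IsStarAt G (branch G S c d) x)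
    (hne : ¬ ∃ x, IsStarAt G S x) : ∃ σ, IsShortPlacement G S σ ∧ G.dist c (σ c) ≤ 2 := by
  obtain ⟨σ, hσ, hσ'⟩ := hS.exists_isRootedPlacement hG hc hstar hne
  refine ⟨σ, ⟨hσ', hσ.dist_apply_le, fun u hu v hv _ => ?_⟩, hσ.dist_root_le⟩
  have dist_root_le : ∀ w ∈ S, G.dist c (σ w) ≤ 3 := fun w hw =>
    hS.dist_le_three hG.connected hc hstar (apply_mem_of_forall_notMem hσ.apply_eq_self hw)
  calc G.dist (σ u) (σ v) ≤ G.dist (σ u) c + G.dist c (σ v) := hG.connected.dist_triangle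
    _ = G.dist c (σ u) + G.dist c (σ v) := by rw [dist_comm]
    _ ≤ 3 + 3 := add_le_add (dist_root_le u hu) (dist_root_le v hv)

end StarBranches

section Gluing

lemma IsAttached.isPlacement_mul [DecidableEq V] (h : IsAttached G S L c d)
    (hσ : IsPlacement G S σ) (hρ : IsPlacement G L ρ) : IsPlacement G (S ∪ L) (σ * ρ) := by
  have hleft : ∀ v ∈ S, (σ * ρ) v = σ v := fun v hv =>
    mul_apply_of_mem_left h.disjoint hρ.apply_eq_self hv
  have hright : ∀ v ∈ L, (σ * ρ) v = ρ v := fun v hv =>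
    mul_apply_of_mem_right h.disjoint hσ.apply_eq_self hρ.apply_eq_self hv
  refine ⟨fun v hv => mul_apply_of_notMem_union hσ.apply_eq_self hρ.apply_eq_self hv,
    fun v hv => ?_, h.forall_adj ?_ ?_ ?_ ?_⟩
  · rcases Finset.mem_union.1 hv with hv | hv
    · exact hleft v hv ▸ hσ.apply_ne v hv
    · exact hright v hv ▸ hρ.apply_ne v hv
  · exact fun u v huv h => huv h.symm
  · intro u hu v hv
    rw [hleft u hu, hleft v hv]
    exact hσ.not_adj u hu v hv
  · intro u hu v hv
    rw [hright u hu, hright v hv]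
    exact hρ.not_adj u hu v hv
  · rw [hleft c h.mem_left, hright d h.mem_right]
    exact fun hadj => hσ.apply_ne c h.mem_left (h.eq_of_adj _
      (apply_mem_of_forall_notMem hσ.apply_eq_self h.mem_left) _
      (apply_mem_of_forall_notMem hρ.apply_eq_self h.mem_right) hadj).1

lemma IsAttached.isShortPlacement_mul [DecidableEq V] (hG : G.Connected)
    (h : IsAttached G S L c d) (hσ : IsShortPlacement G S σ) (hρ : IsShortPlacement G L ρ)
    (hd : G.dist d (ρ d) ≤ 2) : IsShortPlacement G (S ∪ L) (σ * ρ) := by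
  have hleft : ∀ v ∈ S, (σ * ρ) v = σ v := fun v hv =>
    mul_apply_of_mem_left h.disjoint hρ.apply_eq_self hv
  have hright : ∀ v ∈ L, (σ * ρ) v = ρ v := fun v hv =>
    mul_apply_of_mem_right h.disjoint hσ.apply_eq_self hρ.apply_eq_self hv
  refine ⟨h.isPlacement_mul hσ.toIsPlacement hρ.toIsPlacement, fun v hv => ?_,
    h.forall_adj ?_ ?_ ?_ ?_⟩
  · rcases Finset.mem_union.1 hv with hv | hv
    · exact hleft v hv ▸ hσ.dist_apply_le v hv
    · exact hright v hv ▸ hρ.dist_apply_le v hv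
  · intro u v huv
    rwa [dist_comm]
  · intro u hu v hv
    rw [hleft u hu, hleft v hv]
    exact hσ.dist_apply_apply_le u hu v hv
  · intro u hu v hv
    rw [hright u hu, hright v hv]
    exact hρ.dist_apply_apply_le u hu v hv
  · have hc := hσ.dist_apply_le c h.mem_left
    have hcd := dist_eq_one_iff_adj.2 h.adj
    rw [hleft c h.mem_left, hright d h.mem_right]
    calc G.dist (σ c) (ρ d) ≤ G.dist (σ c) c + G.dist c (ρ d) := hG.dist_triangle
      _ ≤ G.dist (σ c) c + (G.dist c d + G.dist d (ρ d)) := by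
        gcongr
        exact hG.dist_triangle
      _ ≤ 6 := by
        rw [dist_comm]
        lia

lemma exists_minimal_not_isStarAt_branch (hG : G.IsTree)
    (h : ∃ c ∈ S, ∃ d ∈ S, G.Adj c d ∧ ¬ ∃ x, IsStarAt G (branch G S c d) x) :
    ∃ d ∈ S, ∃ c ∈ S, G.Adj d c ∧ (¬ ∃ x, IsStarAt G (branch G S d c) x) ∧
      ∀ e ∈ S, G.Adj c e → e ≠ d → ∃ x, IsStarAt G (branch G S c e) x := by
  obtain ⟨c, hc, d, hd, hcd⟩ := h
  obtain ⟨⟨d, c⟩, ⟨hd, hc, hdc, hne⟩, hmin⟩ := exists_minimalFor_of_wellFoundedLT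
    (fun p : V × V => p.1 ∈ S ∧ p.2 ∈ S ∧ G.Adj p.1 p.2 ∧
      ¬ ∃ x, IsStarAt G (branch G S p.1 p.2) x)
    (fun p => branch G S p.1 p.2) ⟨(c, d), hc, hd, hcd⟩
  refine ⟨d, hd, c, hc, hdc, hne, fun e he hce hed => by_contra fun h => ?_⟩
  have hlt := branch_ssubset_branch hG hc hdc hce hed
  exact hlt.not_subset (hmin (j := (c, e)) ⟨hc, he, hce, h⟩ hlt.subset)

lemma IsSubtree.exists_isShortPlacement (hG : G.IsTree) (hS : IsSubtree G S)
    (hne : ¬ ∃ x, IsStarAt G S x) : ∃ σ, IsShortPlacement G S σ := by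
  classical
  induction S using Finset.strongInduction with
  | H S ih =>
  by_cases h : ∃ c ∈ S, ∃ d ∈ S, G.Adj c d ∧ ¬ ∃ x, IsStarAt G (branch G S c d) x
  · obtain ⟨d, hd, c, hc, hdc, hne', hstar⟩ := exists_minimal_not_isStarAt_branch hG h
    by_cases hcd : ∃ x, IsStarAt G (branch G S c d) x
    · obtain ⟨σ, hσ, -⟩ := hS.exists_isShortPlacement_of_isStarAt_branch hG hc
        (fun e he hce => (eq_or_ne e d).elim (fun h => h ▸ hcd) (hstar e he hce)) hne
      exact ⟨σ, hσ⟩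
    · have hlt : branch G S c d ⊂ S := Finset.filter_ssubset.2 ⟨c, hc, by simp⟩
      obtain ⟨σ, hσ⟩ := ih _ hlt (isSubtree_branch hG hS hd hdc.symm) hcd
      have hsub : IsSubtree G (branch G S d c) := isSubtree_branch hG hS hc hdc
      have hstar' : ∀ e ∈ branch G S d c, G.Adj c e →
          ∃ x, IsStarAt G (branch G (branch G S d c) c e) x := fun e he hce => by
        have hed : e ≠ d := fun h => notMem_branch_root (h ▸ he)
        rw [branch_branch hG hdc hce hed]
        exact hstar e (mem_branch.1 he).1 hce hed
      obtain ⟨ρ, hρ, hρc⟩ := hsub.exists_isShortPlacement_of_isStarAt_branch hG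
        (mem_branch_self hc hdc) hstar' hne'
      rw [← branch_union_branch (S := S) hG hdc]
      exact ⟨σ * ρ, (isAttached_branch hG hd hc hdc).isShortPlacement_mul hG.connected hσ hρ hρc⟩
  · push Not at h
    obtain ⟨c, hc⟩ := hS.nonempty
    obtain ⟨σ, hσ, -⟩ := hS.exists_isShortPlacement_of_isStarAt_branch hG hc (h c hc) hne
    exact ⟨σ, hσ⟩

end Gluing

end Trees

/-- every non-star tree on at least 4 vertices admits a fixed-point-free
embedding into its complement whose image lies in T^6. -/
theorem stmt12 {V : Type*} [Fintype V] (G : SimpleGraph V)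
    (hG : IsNonStarTree G) (hcard : 4 ≤ Fintype.card V) :
    ∃ σ : Equiv.Perm V,
      (∀ v, σ v ≠ v) ∧
      (∀ u v, G.Adj u v → ¬ G.Adj (σ u) (σ v)) ∧
      (∀ u v, G.Adj u v → G.dist (σ u) (σ v) ≤ 6) := by
  obtain ⟨hG, hne⟩ := hG
  have huniv : IsSubtree G Finset.univ :=
    ⟨Finset.univ_nonempty_iff.2 hG.connected.nonempty, fun u _ v _ huv => by
      simpa using exists_adj_dist_lt hG.connected huv⟩
  obtain ⟨σ, hσ⟩ := huniv.exists_isShortPlacement hG (by simpa [IsStarAt] using hne)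
  exact ⟨σ, fun v => hσ.apply_ne v (Finset.mem_univ v),
    fun u v => hσ.not_adj u (Finset.mem_univ u) v (Finset.mem_univ v),
    fun u v => hσ.dist_apply_apply_le u (Finset.mem_univ u) v (Finset.mem_univ v)⟩
end

section
/- For every non-star tree T and every vertex x of T, there exists a (T,x)-well 2-placement: a fixed-point-free permutation σ of V(T) such that (1) σ is a 2-placement of T, (2) dist(σ(u),σ(v)) ≤ 6 for every edge uv of T, (3) dist(x,σ(x)) ≤ 2, (4) dist(y,σ(y)) ≤ 3 for every neighbor y of x, (5) dist(y,σ(y)) ≤ 4 for every leaf y of T, and (6) every cycle of σ has length at most 5. -/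
open SimpleGraph

/-!
Root the tree at `x` and work upwards from the leaves. A set `C` of children of `p` *can be hung*
if the subtrees below `C` have a joint placement moving each `c ∈ C` to within distance `3` of both
`c` and `p`. Such a placement combines with any placement of the remaining vertices that moves `p`
by at most `3`: an edge `pc` is mapped to a pair at distance at most `6`, which is not an edge
because `p`, the only vertex through which the subtrees are reached, is moved.

The only set of children that cannot be hung in general is a single child whose subtree is a star,
centred at the child or at its only child. One shows simultaneously that every other set of
children can be hung and that a vertex whose subtree is not such a star has a well placement. In
each case some vertices close to `p` are chosen such that the remaining children of every one of
them can be hung; their number is bounded, so that a finite list of patterns, each with an explicit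
permutation, covers all cases.
-/

section Placement

variable {V : Type*} {G : SimpleGraph V} {A B : Set V} {σ τ : Equiv.Perm V} {u v : V}

/-- `σ` is a 2-placement of the subgraph of `G` induced on `A`, fixing everything outside `A`,
with the metric and cycle bounds of a well 2-placement; distances and adjacency of images are
those of `G`. The displacement bound is imposed at every vertex, not only at leaves. -/
structure IsPlacementOn (G : SimpleGraph V) (A : Set V) (σ : Equiv.Perm V) : Prop where
  apply_ne_iff : ∀ v, σ v ≠ v ↔ v ∈ A
  not_adj : ∀ ⦃u v⦄, u ∈ A → v ∈ A → G.Adj u v → ¬ G.Adj (σ u) (σ v)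
  dist_edge_le : ∀ ⦃u v⦄, u ∈ A → v ∈ A → G.Adj u v → G.dist (σ u) (σ v) ≤ 6
  dist_le : ∀ v, G.dist v (σ v) ≤ 4
  exists_pow_eq : ∀ v, ∃ k, 0 < k ∧ k ≤ 5 ∧ (σ ^ k) v = v

namespace IsPlacementOn

theorem apply_eq (h : IsPlacementOn G A σ) (hv : v ∉ A) : σ v = v :=
  not_ne_iff.1 (mt (h.apply_ne_iff v).1 hv)

theorem apply_mem (h : IsPlacementOn G A σ) (hv : v ∈ A) : σ v ∈ A :=
  (h.apply_ne_iff _).1 fun e => (h.apply_ne_iff v).2 hv (σ.injective e)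

theorem empty : IsPlacementOn G ∅ 1 where
  apply_ne_iff := by simp
  not_adj := by simp
  dist_edge_le := by simp
  dist_le := by simp
  exists_pow_eq v := ⟨1, by simp⟩

theorem mul_apply_left (hτ : IsPlacementOn G B τ) (h : Disjoint A B) (hv : v ∈ A) :
    (σ * τ) v = σ v := by
  rw [Equiv.Perm.mul_apply, hτ.apply_eq (h.notMem_of_mem_left hv)]

theorem mul_apply_right (hσ : IsPlacementOn G A σ) (hτ : IsPlacementOn G B τ) (h : Disjoint A B)
    (hv : v ∈ B) : (σ * τ) v = τ v :=
  hσ.apply_eq (h.notMem_of_mem_right (hτ.apply_mem hv))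

theorem disjoint (hσ : IsPlacementOn G A σ) (hτ : IsPlacementOn G B τ) (h : Disjoint A B) :
    σ.Disjoint τ := fun v => by
  by_cases hv : v ∈ A
  · exact .inr (hτ.apply_eq (h.notMem_of_mem_left hv))
  · exact .inl (hσ.apply_eq hv)

theorem exists_mul_pow_eq (hσ : IsPlacementOn G A σ) (hτ : IsPlacementOn G B τ)
    (h : Disjoint A B) (v : V) : ∃ k, 0 < k ∧ k ≤ 5 ∧ ((σ * τ) ^ k) v = v := by
  have hστ := hσ.disjoint hτ h
  have hpow (k : ℕ) : ((σ * τ) ^ k) v = (σ ^ k) ((τ ^ k) v) := by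
    rw [hστ.commute.mul_pow, Equiv.Perm.mul_apply]
  rcases hστ v with hv | hv
  · obtain ⟨k, hk, hk5, e⟩ := hτ.exists_pow_eq v
    refine ⟨k, hk, hk5, ?_⟩
    rw [hpow, e, Equiv.Perm.pow_apply_eq_self_of_apply_eq_self hv]
  · obtain ⟨k, hk, hk5, e⟩ := hσ.exists_pow_eq v
    refine ⟨k, hk, hk5, ?_⟩
    rw [hpow, Equiv.Perm.pow_apply_eq_self_of_apply_eq_self hv, e]

theorem mul (hσ : IsPlacementOn G A σ) (hτ : IsPlacementOn G B τ) (h : Disjoint A B)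
    (cross : ∀ a ∈ A, ∀ b ∈ B, G.Adj a b →
      ¬ G.Adj (σ a) (τ b) ∧ G.dist (σ a) (τ b) ≤ 6) :
    IsPlacementOn G (A ∪ B) (σ * τ) := by
  have left {a} (ha : a ∈ A) : (σ * τ) a = σ a := hτ.mul_apply_left h ha
  have right {b} (hb : b ∈ B) : (σ * τ) b = τ b := hσ.mul_apply_right hτ h hb
  have outside {v} (hv : v ∉ A ∪ B) : (σ * τ) v = v := by
    rw [Set.mem_union, not_or] at hv
    rw [Equiv.Perm.mul_apply, hτ.apply_eq hv.2, hσ.apply_eq hv.1]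
  have edge {u v} (hu : u ∈ A ∪ B) (hv : v ∈ A ∪ B) (huv : G.Adj u v) :
      ¬ G.Adj ((σ * τ) u) ((σ * τ) v) ∧ G.dist ((σ * τ) u) ((σ * τ) v) ≤ 6 := by
    rcases hu with hu | hu <;> rcases hv with hv | hv
    · rw [left hu, left hv]
      exact ⟨hσ.not_adj hu hv huv, hσ.dist_edge_le hu hv huv⟩
    · rw [left hu, right hv]
      exact cross u hu v hv huv
    · rw [right hu, left hv, G.adj_comm, G.dist_comm]
      exact cross v hv u hu huv.symm
    · rw [right hu, right hv]
      exact ⟨hτ.not_adj hu hv huv, hτ.dist_edge_le hu hv huv⟩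
  refine ⟨fun v => ?_, fun u v hu hv huv => (edge hu hv huv).1,
    fun u v hu hv huv => (edge hu hv huv).2, fun v => ?_, hσ.exists_mul_pow_eq hτ h⟩
  · refine ⟨not_imp_comm.1 outside, ?_⟩
    rintro (hv | hv)
    · exact left hv ▸ (hσ.apply_ne_iff v).2 hv
    · exact right hv ▸ (hτ.apply_ne_iff v).2 hv
  · rcases hσ.disjoint hτ h v with hv | hv
    · by_cases hB : v ∈ B
      · exact right hB ▸ hτ.dist_le v
      · rw [Equiv.Perm.mul_apply, hτ.apply_eq hB, hv, dist_self]
        exact Nat.zero_le 4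
    · exact (congrArg σ hv : (σ * τ) v = σ v) ▸ hσ.dist_le v

theorem exists_biUnion {ι : Type*} {A : ι → Set V} {σ : ι → Equiv.Perm V} (s : Finset ι)
    (hσ : ∀ i ∈ s, IsPlacementOn G (A i) (σ i))
    (hA : ∀ i ∈ s, ∀ j ∈ s, i ≠ j → Disjoint (A i) (A j))
    (hadj : ∀ i ∈ s, ∀ j ∈ s, i ≠ j → ∀ a ∈ A i, ∀ b ∈ A j, ¬ G.Adj a b) :
    ∃ ρ, IsPlacementOn G (⋃ i ∈ s, A i) ρ ∧ ∀ i ∈ s, ∀ v ∈ A i, ρ v = σ i v := by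
  classical
  induction s using Finset.induction_on with
  | empty => exact ⟨1, by simpa using empty, by simp⟩
  | insert i s hi ih =>
    obtain ⟨ρ, hρ, hρσ⟩ := ih (fun j hj => hσ j (Finset.mem_insert_of_mem hj))
      (fun j hj k hk => hA j (Finset.mem_insert_of_mem hj) k (Finset.mem_insert_of_mem hk))
      (fun j hj k hk => hadj j (Finset.mem_insert_of_mem hj) k (Finset.mem_insert_of_mem hk))
    have hi' := Finset.mem_insert_self i s
    have hne {j} (hj : j ∈ s) : i ≠ j := fun e => hi (e ▸ hj)
    have hdisj : Disjoint (A i) (⋃ j ∈ s, A j) := Set.disjoint_iUnion₂_right.2 fun j hj =>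
      hA i hi' j (Finset.mem_insert_of_mem hj) (hne hj)
    refine ⟨σ i * ρ, ?_, fun j hj v hv => ?_⟩
    · rw [Finset.set_biUnion_insert]
      refine (hσ i hi').mul hρ hdisj fun a ha b hb hab => ?_
      obtain ⟨j, hj, hb⟩ := Set.mem_iUnion₂.1 hb
      exact (hadj i hi' j (Finset.mem_insert_of_mem hj) (hne hj) a ha b hb hab).elim
    · rcases Finset.mem_insert.1 hj with rfl | hj
      · exact hρ.mul_apply_left hdisj hv
      · rw [(hσ i hi').mul_apply_right hρ hdisj (Set.mem_biUnion hj hv), hρσ j hj v hv]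

theorem card_support_cycleOf_le [Fintype V] [DecidableEq V] (h : IsPlacementOn G A σ) (v : V) :
    (σ.cycleOf v).support.card ≤ 5 := by
  obtain ⟨k, hk, hk5, e⟩ := h.exists_pow_eq v
  by_cases hv : σ v = v
  · rw [Equiv.Perm.cycleOf_eq_one_iff σ |>.2 hv]
    simp
  · have hcycle := Equiv.Perm.isCycle_cycleOf σ hv
    rw [← hcycle.orderOf]
    have hpow : σ.cycleOf v ^ k = 1 :=
      (hcycle.pow_eq_one_iff' (by rwa [Equiv.Perm.cycleOf_apply_self])).2 (by
        rw [Equiv.Perm.cycleOf_pow_apply_self, e])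
    exact (Nat.le_of_dvd hk (orderOf_dvd_of_pow_eq_one hpow)).trans hk5

end IsPlacementOn

end Placement

section Rooting

variable {V : Type*} {G : SimpleGraph V}

/-- A rooted presentation of a graph: every vertex has a finite set of children, and the edges of
`G` are exactly the pairs of a vertex and one of its children. The root is not recorded; in a
connected graph it is the vertex of depth `0`. -/
structure Rooting (G : SimpleGraph V) where
  children : V → Finset V
  depth : V → ℕ
  adj_iff : ∀ u v, G.Adj u v ↔ v ∈ children u ∨ u ∈ children v
  depth_child : ∀ ⦃u v⦄, v ∈ children u → depth v = depth u + 1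
  parent_unique : ∀ ⦃u v w⦄, w ∈ children u → w ∈ children v → u = v

namespace Rooting

variable (T : Rooting G)

/-- `T.Desc u v`: the vertex `v` is `u` or a descendant of `u`. -/
def Desc : V → V → Prop :=
  Relation.ReflTransGen fun u v => v ∈ T.children u

/-- The set of all members and descendants of members of `C`. -/
def below (C : Finset V) : Set V :=
  {w | ∃ c ∈ C, T.Desc c w}

variable {T} {a b c p u v w : V} {C D : Finset V}

theorem Desc.refl (v : V) : T.Desc v v := Relation.ReflTransGen.refl

theorem Desc.depth_le (h : T.Desc u v) : T.depth u ≤ T.depth v := by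
  induction h with
  | refl => rfl
  | tail _ hc ih => rw [T.depth_child hc]; omega

theorem Desc.eq_of_depth_le (h : T.Desc u v) (hd : T.depth v ≤ T.depth u) : v = u := by
  rcases h.cases_tail with rfl | ⟨w, huw, hwv⟩
  · rfl
  · have := Desc.depth_le huw
    have := T.depth_child hwv
    omega

theorem Desc.to_parent (h : T.Desc u w) (hne : w ≠ u) (hw : w ∈ T.children v) : T.Desc u v := by
  rcases h.cases_tail with rfl | ⟨v', huv', hw'⟩
  · exact absurd rfl hne
  · exact T.parent_unique hw' hw ▸ huv'

theorem Desc.total (ha : T.Desc a w) (hb : T.Desc b w) : T.Desc a b ∨ T.Desc b a := by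
  induction ha with
  | refl => exact .inr hb
  | @tail v w hav hw ih =>
    by_cases hwb : w = b
    · exact .inl (hwb ▸ hav.tail hw)
    · exact ih (hb.to_parent hwb hw)

theorem Desc.eq_of_siblings (ha : a ∈ T.children p) (hb : b ∈ T.children p)
    (haw : T.Desc a w) (hbw : T.Desc b w) : a = b := by
  have hab : T.depth a = T.depth b := by rw [T.depth_child ha, T.depth_child hb]
  rcases haw.total hbw with h | h
  · exact (h.eq_of_depth_le hab.ge).symm
  · exact h.eq_of_depth_le hab.le

theorem adj_of_mem_children (h : v ∈ T.children u) : G.Adj u v := (T.adj_iff u v).2 (.inl h)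

theorem subset_below (C : Finset V) : ↑C ⊆ T.below C := fun c hc => ⟨c, hc, .refl c⟩

theorem below_children_subset (hv : v ∈ T.below C) : T.below (T.children v) ⊆ T.below C := by
  obtain ⟨c, hc, hcv⟩ := hv
  rintro w ⟨u, hu, huw⟩
  exact ⟨c, hc, (hcv.tail hu).trans huw⟩

theorem below_mono (h : C ⊆ D) : T.below C ⊆ T.below D :=
  fun _ ⟨c, hc, hcw⟩ => ⟨c, h hc, hcw⟩

theorem below_union [DecidableEq V] (C D : Finset V) :
    T.below (C ∪ D) = T.below C ∪ T.below D := by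
  ext w
  simp only [below, Finset.mem_union, Set.mem_ofPred_eq, Set.mem_union, or_and_right, exists_or]

theorem depth_lt_of_mem_below_children (h : w ∈ T.below (T.children v)) :
    T.depth v < T.depth w := by
  obtain ⟨c, hc, hcw⟩ := h
  have := hcw.depth_le
  rw [T.depth_child hc] at this
  omega

theorem notMem_below_of_subset_children (hC : C ⊆ T.children p) : p ∉ T.below C :=
  fun h => (T.depth_lt_of_mem_below_children (below_mono hC h)).false

theorem below_singleton_eq (v : V) : T.below {v} = insert v (T.below (T.children v)) := by
  ext w
  simp only [below, Finset.mem_singleton, exists_eq_left, Set.mem_ofPred_eq, Set.mem_insert_iff]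
  exact Relation.ReflTransGen.cases_head_iff.trans (or_congr_left eq_comm)

theorem below_eq_coe (h : ∀ c ∈ C, T.children c = ∅) : T.below C = C := by
  refine Set.Subset.antisymm ?_ (subset_below C)
  rintro w ⟨c, hc, hcw⟩
  rcases hcw.cases_head with rfl | ⟨d, hd, -⟩
  · exact hc
  · simp [h c hc] at hd

theorem mem_children_of_adj (hu : T.depth u = 0) (h : G.Adj u v) : v ∈ T.children u := by
  refine ((T.adj_iff u v).1 h).resolve_right fun hv => ?_
  have := T.depth_child hv
  omega

theorem mem_below_or_of_adj (hC : C ⊆ T.children p) (hu : u ∈ T.below C) (huv : G.Adj u v) :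
    v ∈ T.below C ∨ v = p ∧ u ∈ C := by
  obtain ⟨c, hc, hcu⟩ := hu
  rcases (T.adj_iff u v).1 huv with h | h
  · exact .inl ⟨c, hc, hcu.tail h⟩
  · by_cases huc : u = c
    · exact .inr ⟨T.parent_unique h (huc ▸ hC hc), huc ▸ hc⟩
    · exact .inl ⟨c, hc, hcu.to_parent huc h⟩

theorem disjoint_below (hC : C ⊆ T.children p) (hD : D ⊆ T.children p) (h : Disjoint C D) :
    Disjoint (T.below C) (T.below D) := by
  rw [Set.disjoint_left]
  rintro w ⟨c, hc, hcw⟩ ⟨d, hd, hdw⟩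
  exact Finset.disjoint_left.1 h hc (hcw.eq_of_siblings (hC hc) (hD hd) hdw ▸ hd)

theorem disjoint_below_erase [DecidableEq V] (hC : C ⊆ T.children p) (hc : c ∈ C) :
    Disjoint (insert c (T.below (T.children c))) (T.below (C.erase c)) := by
  rw [← below_singleton_eq]
  exact disjoint_below (Finset.singleton_subset_iff.2 (hC hc))
    ((Finset.erase_subset c C).trans hC) (by simp)

theorem not_adj_of_mem_below (hC : C ⊆ T.children p) (hD : D ⊆ T.children p) (h : Disjoint C D)
    (hu : u ∈ T.below C) (hv : v ∈ T.below D) : ¬ G.Adj u v := by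
  intro huv
  rcases mem_below_or_of_adj hC hu huv with hv' | ⟨rfl, -⟩
  · exact Set.disjoint_left.1 (disjoint_below hC hD h) hv' hv
  · exact notMem_below_of_subset_children hD hv

theorem below_singleton_eq_univ (hG : G.Connected) {r : V} (hr : T.depth r = 0) :
    T.below {r} = Set.univ := by
  refine Set.eq_univ_of_forall fun v => ?_
  induction (reachable_iff_reflTransGen r v).1 (hG.preconnected r v) with
  | refl => exact subset_below _ (by simp)
  | @tail u v _ huv ih =>
    obtain ⟨c, hc, hcu⟩ := ih
    obtain rfl := Finset.mem_singleton.1 hc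
    rcases (T.adj_iff u v).1 huv with h | h
    · exact ⟨c, hc, hcu.tail h⟩
    · refine ⟨c, hc, hcu.to_parent ?_ h⟩
      rintro rfl
      simpa [hr] using T.depth_child h

end Rooting

theorem eq_of_adj_of_dist_eq_add_one (hG : G.IsTree) {r u v w : V} (hu : G.Adj u w)
    (hv : G.Adj v w) (hud : G.dist r w = G.dist r u + 1) (hvd : G.dist r w = G.dist r v + 1) :
    u = v := by
  obtain ⟨p, hp⟩ := hG.connected.exists_walk_length_eq_dist r u
  obtain ⟨q, hq⟩ := hG.connected.exists_walk_length_eq_dist r v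
  have hpw : (p.concat hu).IsPath :=
    Walk.isPath_of_length_eq_dist _ (by rw [Walk.length_concat, hp, hud])
  have hqw : (q.concat hv).IsPath :=
    Walk.isPath_of_length_eq_dist _ (by rw [Walk.length_concat, hq, hvd])
  simpa using congrArg Walk.penultimate ((hG.existsUnique_path r w).unique hpw hqw)

theorem exists_rooting_of_isTree [Finite V] (hG : G.IsTree) (r : V) :
    ∃ T : Rooting G, T.depth r = 0 := by
  classical
  have := Fintype.ofFinite V
  refine ⟨{
    children u := {v | G.Adj u v ∧ G.dist r v = G.dist r u + 1}
    depth := G.dist r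
    adj_iff u v := ?_
    depth_child u v h := (Finset.mem_filter.1 h).2.2
    parent_unique u v w hu hv := ?_ }, dist_self⟩
  · simp only [Finset.mem_filter, Finset.mem_univ, true_and, G.adj_comm v u, ← and_or_left]
    refine ⟨fun h => ⟨h, ?_⟩, And.left⟩
    have := hG.dist_eq_dist_add_one_of_adj r h
    omega
  · obtain ⟨hu, hud⟩ := (Finset.mem_filter.1 hu).2
    obtain ⟨hv, hvd⟩ := (Finset.mem_filter.1 hv).2
    exact eq_of_adj_of_dist_eq_add_one hG hu hv hud hvd

end Rooting

section Hanging

namespace Rooting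

variable {V : Type*} {G : SimpleGraph V} (T : Rooting G)

/-- `T.Hangs p C`: the subtrees below the set `C` of children of `p` admit a joint placement that
can be hung below any placement moving `p` a distance at most `3`. -/
def Hangs (p : V) (C : Finset V) : Prop :=
  ∃ σ, IsPlacementOn G (T.below C) σ ∧ ∀ c ∈ C, G.dist p (σ c) ≤ 3 ∧ G.dist c (σ c) ≤ 3

/-- `T.HasWell p`: the subtree `T_p` below `p` admits a `(T_p, p)`-well 2-placement. -/
def HasWell (p : V) : Prop :=
  ∃ σ, IsPlacementOn G (T.below {p}) σ ∧ G.dist p (σ p) ≤ 2 ∧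
    ∀ c ∈ T.children p, G.dist c (σ c) ≤ 3

variable {T} {p v w : V} {C D : Finset V}

theorem Hangs.empty (p : V) : T.Hangs p ∅ :=
  ⟨1, by simpa [below] using IsPlacementOn.empty, by simp⟩

theorem Hangs.union [DecidableEq V] (hC : C ⊆ T.children p) (hD : D ⊆ T.children p)
    (hCD : Disjoint C D) (h : T.Hangs p C) (h' : T.Hangs p D) : T.Hangs p (C ∪ D) := by
  obtain ⟨σ, hσ, hσd⟩ := h
  obtain ⟨τ, hτ, hτd⟩ := h'
  have hdisj := disjoint_below hC hD hCD
  refine ⟨σ * τ, ?_, fun c hc => ?_⟩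
  · rw [below_union]
    exact hσ.mul hτ hdisj fun a ha b hb hab => (not_adj_of_mem_below hC hD hCD ha hb hab).elim
  · rcases Finset.mem_union.1 hc with hc | hc
    · rw [hτ.mul_apply_left hdisj (subset_below C hc)]
      exact hσd c hc
    · rw [hσ.mul_apply_right hτ hdisj (subset_below D hc)]
      exact hτd c hc

theorem HasWell.hangs (hG : G.Connected) (hz : v ∈ T.children p) (h : T.HasWell v) :
    T.Hangs p {v} := by
  obtain ⟨σ, hσ, hd, -⟩ := h
  refine ⟨σ, hσ, fun c hc => ?_⟩
  obtain rfl := Finset.mem_singleton.1 hc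
  have := hG.dist_triangle (u := p) (v := c) (w := σ c)
  rw [dist_eq_one_iff_adj.2 (adj_of_mem_children hz)] at this
  omega

variable (T) in
/-- `S` is the vertex set of a subtree with topmost vertex `p`. -/
structure IsSubtree (p : V) (S : Finset V) : Prop where
  mem : p ∈ S
  exists_parent : ∀ w ∈ S, w ≠ p → ∃ v ∈ S, w ∈ T.children v
  depth_le : ∀ w ∈ S, T.depth p ≤ T.depth w

namespace IsSubtree

variable {S : Finset V} {D D' : Finset V} {v' : V}

theorem notMem_below (hS : T.IsSubtree p S) (hv : v ∈ S) (hD : D ⊆ T.children v)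
    (hDS : Disjoint D S) (hw : w ∈ S) : w ∉ T.below D := by
  rintro ⟨c, hc, hcw⟩
  have hvp := hS.depth_le v hv
  have hcv := T.depth_child (hD hc)
  induction hcw with
  | refl => exact Finset.disjoint_left.1 hDS hc hw
  | @tail u w hcu huw ih =>
    have hwp : w ≠ p := by
      rintro rfl
      have := Desc.depth_le hcu
      have := T.depth_child huw
      omega
    obtain ⟨u', hu', hu'w⟩ := hS.exists_parent w hw hwp
    exact ih (T.parent_unique huw hu'w ▸ hu')

theorem eq_of_mem_below (hS : T.IsSubtree p S) (hv : v ∈ S) (hv' : v' ∈ S)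
    (hD : D ⊆ T.children v) (hD' : D' ⊆ T.children v') (hDS : Disjoint D S) (hDS' : Disjoint D' S)
    (hw : w ∈ T.below D) (hw' : w ∈ T.below D') : v = v' := by
  obtain ⟨c, hc, hcw⟩ := hw
  obtain ⟨c', hc', hcw'⟩ := hw'
  by_cases hcc : c = c'
  · exact T.parent_unique (hD hc) (hcc ▸ hD' hc')
  · rcases hcw.total hcw' with h | h
    · exact absurd ⟨c, hc, h.to_parent (Ne.symm hcc) (hD' hc')⟩ (hS.notMem_below hv hD hDS hv')
    · exact absurd ⟨c', hc', h.to_parent hcc (hD hc)⟩ (hS.notMem_below hv' hD' hDS' hv)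

theorem eq_of_adj (hS : T.IsSubtree p S) (hv : v ∈ S) (hD : D ⊆ T.children v)
    (hDS : Disjoint D S) (hv' : v' ∈ S) (hw : w ∈ T.below D) (h : G.Adj v' w) :
    v' = v ∧ w ∈ D :=
  (mem_below_or_of_adj hD hw h.symm).resolve_left (hS.notMem_below hv hD hDS hv')

theorem not_adj_below (hS : T.IsSubtree p S) (hv : v ∈ S) (hv' : v' ∈ S) (hne : v ≠ v')
    (hD : D ⊆ T.children v) (hD' : D' ⊆ T.children v') (hDS : Disjoint D S) (hDS' : Disjoint D' S)
    {w' : V} (hw : w ∈ T.below D) (hw' : w' ∈ T.below D') : ¬ G.Adj w w' := by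
  intro h
  rcases mem_below_or_of_adj hD hw h with hw'' | ⟨rfl, -⟩
  · exact hne (hS.eq_of_mem_below hv hv' hD hD' hDS hDS' hw'' hw')
  · exact hS.notMem_below hv' hD' hDS' hv hw'

theorem exists_isPlacementOn_glue (hG : G.Connected) (hS : T.IsSubtree p S) {A : Set V} (hA : A ⊆ S)
    {σ₀ : Equiv.Perm V} (hσ₀ : IsPlacementOn G A σ₀) {D : V → Finset V}
    (hD : ∀ v ∈ S, D v ⊆ T.children v) (hDS : ∀ v ∈ S, Disjoint (D v) S)
    (hang : ∀ v ∈ S, T.Hangs v (D v)) (hdist : ∀ v ∈ S, (D v).Nonempty → G.dist v (σ₀ v) ≤ 3) :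
    ∃ σ, IsPlacementOn G (A ∪ ⋃ v ∈ S, T.below (D v)) σ ∧ (∀ v ∈ A, σ v = σ₀ v) ∧
      ∀ v ∈ S, ∀ c ∈ D v, G.dist v (σ c) ≤ 3 ∧ G.dist c (σ c) ≤ 3 := by
  choose! τ hτ hτd using hang
  obtain ⟨ρ, hρ, hρτ⟩ := IsPlacementOn.exists_biUnion S hτ
    (fun v hv v' hv' hne => Set.disjoint_left.2 fun w hw hw' => hne
      (hS.eq_of_mem_below hv hv' (hD v hv) (hD v' hv') (hDS v hv) (hDS v' hv') hw hw'))
    (fun v hv v' hv' hne w hw w' hw' => hS.not_adj_below hv hv' hne (hD v hv) (hD v' hv')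
      (hDS v hv) (hDS v' hv') hw hw')
  have hdisj : Disjoint A (⋃ v ∈ S, T.below (D v)) := Set.disjoint_iUnion₂_right.2 fun v hv =>
    Set.disjoint_left.2 fun w hw => hS.notMem_below hv (hD v hv) (hDS v hv) (hA hw)
  refine ⟨σ₀ * ρ, hσ₀.mul hρ hdisj fun a ha b hb hab => ?_,
    fun v hv => hρ.mul_apply_left hdisj hv, fun v hv c hc => ?_⟩
  · obtain ⟨v, hv, hb⟩ := Set.mem_iUnion₂.1 hb
    obtain ⟨rfl, hbD⟩ := hS.eq_of_adj hv (hD v hv) (hDS v hv) (hA ha) hb hab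
    rw [hρτ a hv b hb]
    refine ⟨fun h => (hσ₀.apply_ne_iff a).2 ha ?_, ?_⟩
    · exact (hS.eq_of_adj hv (hD a hv) (hDS a hv) (hA (hσ₀.apply_mem ha)) ((hτ a hv).apply_mem hb)
        h).1
    · calc G.dist (σ₀ a) (τ a b) ≤ G.dist (σ₀ a) a + G.dist a (τ a b) := hG.dist_triangle
        _ ≤ 3 + 3 := Nat.add_le_add (G.dist_comm ▸ hdist a hv ⟨b, hbD⟩) (hτd a hv b hbD).1
  · have hcD := subset_below (T := T) (D v) hc
    rw [hσ₀.mul_apply_right hρ hdisj (Set.mem_biUnion hv hcD), hρτ v hv c hcD]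
    exact hτd v hv c hc

theorem below_eq (hS : T.IsSubtree p S) [DecidableEq V] (hC : C ⊆ T.children p)
    (hSC : ∀ v ∈ S, v ≠ p → v ∈ T.below C) :
    T.below C = (↑S \ {p}) ∪ ⋃ v ∈ S, T.below (Function.update T.children p C v \ S) := by
  have hDC {v} (hv : v ∈ S) : T.below (Function.update T.children p C v \ S) ⊆ T.below C := by
    refine (below_mono Finset.sdiff_subset).trans ?_
    rcases eq_or_ne v p with rfl | hvp
    · rw [Function.update_self]
    · rw [Function.update_of_ne hvp]
      exact below_children_subset (hSC v hv hvp)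
  refine Set.Subset.antisymm ?_
    (Set.union_subset (fun v hv => hSC v hv.1 hv.2) (Set.iUnion₂_subset fun v hv => hDC hv))
  have step {u w} (hu : u ∈ S) (hw : w ∈ Function.update T.children p C u) (hwp : w ≠ p) :
      w ∈ (↑S \ {p}) ∪ ⋃ v ∈ S, T.below (Function.update T.children p C v \ S) := by
    by_cases hwS : w ∈ S
    · exact .inl ⟨hwS, hwp⟩
    · exact .inr (Set.mem_biUnion hu (subset_below _ (Finset.mem_sdiff.2 ⟨hw, hwS⟩)))
  rintro w ⟨c, hc, hcw⟩
  induction hcw with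
  | refl =>
    refine step hS.mem (by simpa using hc) ?_
    rintro rfl
    exact notMem_below_of_subset_children hC (subset_below _ hc)
  | @tail u w hcu huw ih =>
    rcases ih with hu | hu
    · refine step hu.1 (by rwa [Function.update_of_ne hu.2]) ?_
      rintro rfl
      exact notMem_below_of_subset_children hC ⟨c, hc, hcu.tail huw⟩
    · obtain ⟨v, hv, d, hd, hdu⟩ := Set.mem_iUnion₂.1 hu
      exact .inr (Set.mem_biUnion hv ⟨d, hd, hdu.tail huw⟩)

end IsSubtree

end Rooting

end Hanging

section Patterns

/-- A pattern for a set of siblings and their descendants. -/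
inductive Forest
  /-- a set about whose members nothing is recorded, except that it is not blocked -/
  | nil
  /-- the empty set -/
  | full
  /-- a set with a member whose children match the first pattern, the rest of the set matching the
  second pattern -/
  | cons (children siblings : Forest)
  deriving DecidableEq

namespace Forest

/-- The number of vertices recorded in a pattern. -/
def size : Forest → ℕ
  | nil => 0
  | full => 0
  | cons F H => F.size + H.size + 1

/-- Whether a pattern records all members of the sets that match it. -/
def IsComplete : Forest → Bool
  | nil => false
  | full => true
  | cons _ H => H.IsComplete

/-- The recorded vertices in preorder, numbered consecutively from `k`, each given by the number
of its parent and by whether all its children are recorded; `q` is the number of the parent of the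
roots. -/
def nodes : Forest → (q k : ℕ) → List (ℕ × Bool)
  | nil, _, _ => []
  | full, _, _ => []
  | cons F H, q, k => (q, F.IsComplete) :: (F.nodes k (k + 1) ++ H.nodes q (k + 1 + F.size))

end Forest

namespace Rooting

variable {V : Type*} {G : SimpleGraph V} (T : Rooting G)

/-- The subtree below `v` is a star centred at `v` or at the only child of `v`; in particular,
leaves count as star vertices. -/
def IsStar (v : V) : Prop :=
  (∀ c ∈ T.children v, T.children c = ∅) ∨
    ∃ c, T.children v = {c} ∧ ∀ e ∈ T.children c, T.children e = ∅

/-- The sets of siblings that cannot be hung in general: those consisting of one star vertex. -/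
def Blocked (C : Finset V) : Prop :=
  ∃ s, C = {s} ∧ T.IsStar s

section Blocked

variable {T} {C : Finset V} {x : V}

theorem not_blocked_empty : ¬ T.Blocked ∅ :=
  fun ⟨s, hs, _⟩ => Finset.singleton_ne_empty s hs.symm

theorem not_blocked_of_one_lt_card (h : 1 < C.card) : ¬ T.Blocked C := by
  rintro ⟨s, rfl, -⟩
  simp at h

theorem IsStar.exists_forall_adj (hx : T.IsStar x) (hG : G.Connected) (hroot : T.depth x = 0) :
    ∃ v, ∀ w, w ≠ v → G.Adj v w := by
  have huniv := below_singleton_eq_univ hG hroot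
  rw [below_singleton_eq] at huniv
  rcases hx with hx | ⟨c, hc, hleaf⟩
  · rw [below_eq_coe hx] at huniv
    refine ⟨x, fun w hw => ?_⟩
    exact adj_of_mem_children ((huniv.ge (Set.mem_univ w)).resolve_left hw)
  · rw [hc, below_singleton_eq, below_eq_coe hleaf] at huniv
    refine ⟨c, fun w hw => ?_⟩
    rcases huniv.ge (Set.mem_univ w) with rfl | h
    · exact (adj_of_mem_children (hc ▸ Finset.mem_singleton_self c)).symm
    · exact adj_of_mem_children (h.resolve_left hw)

end Blocked

/-- The entry `e` of `Forest.nodes` is correct for the vertex `v` when vertices are numbered by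
their positions in `L`. -/
def Records (L : List V) (e : ℕ × Bool) (v : V) : Prop :=
  (∃ u, L[e.1]? = some u ∧ v ∈ T.children u) ∧ (e.2 → ∀ w ∈ T.children v, w ∈ L)

variable {T} in
theorem Records.append {L : List V} {e : ℕ × Bool} {v : V} (h : T.Records L e v) (M : List V) :
    T.Records (L ++ M) e v := by
  obtain ⟨⟨u, hu, huv⟩, he⟩ := h
  refine ⟨⟨u, ?_, huv⟩, fun hb w hw => List.mem_append_left M (he hb w hw)⟩
  rw [List.getElem?_append_left (List.getElem?_eq_some_iff.1 hu).1, hu]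

variable [DecidableEq V]

/-- `T.Occurs F C l`: the set of siblings `C` matches the pattern `F`, and `l` lists the recorded
vertices in preorder. -/
inductive Occurs : Forest → Finset V → List V → Prop
  | nil {C : Finset V} : ¬ T.Blocked C → Occurs .nil C []
  | full : Occurs .full ∅ []
  | cons {F H : Forest} {C : Finset V} {c : V} {l m : List V} : c ∈ C →
      Occurs F (T.children c) l → Occurs H (C.erase c) m → Occurs (.cons F H) C (c :: (l ++ m))

variable {T} {F : Forest} {C : Finset V} {p : V} {l : List V}

namespace Occurs

theorem length_eq (h : T.Occurs F C l) : l.length = F.size := by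
  induction h with
  | nil | full => rfl
  | cons _ _ _ ihF ihH => simp only [List.length_cons, List.length_append, ihF, ihH, Forest.size]

theorem subset_below (h : T.Occurs F C l) : ∀ v ∈ l, v ∈ T.below C := by
  induction h with
  | nil | full => simp
  | @cons F H C c l m hc _ _ ihF ihH =>
    have hcC : c ∈ T.below C := Rooting.subset_below C hc
    simp only [List.mem_cons, List.mem_append]
    rintro v (rfl | hv | hv)
    · exact hcC
    · exact below_children_subset hcC (ihF v hv)
    · exact below_mono (Finset.erase_subset c C) (ihH v hv)

theorem subset_of_isComplete (h : T.Occurs F C l) (hF : F.IsComplete) : ∀ c ∈ C, c ∈ l := by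
  induction h with
  | nil => cases hF
  | full => simp
  | @cons F H C c l m hc _ _ _ ihH =>
    intro d hd
    rcases eq_or_ne d c with rfl | hdc
    · exact List.mem_cons_self
    · have hdm := ihH hF d (Finset.mem_erase.2 ⟨hdc, hd⟩)
      exact List.mem_cons_of_mem _ (List.mem_append_right _ hdm)

theorem nodup (h : T.Occurs F C l) (hC : C ⊆ T.children p) : l.Nodup := by
  induction h generalizing p with
  | nil | full => exact List.nodup_nil
  | @cons F H C c l m hc hF hH ihF ihH =>
    have hdisj := Set.disjoint_left.1 (disjoint_below_erase hC hc)
    simp only [List.nodup_cons, List.mem_append, not_or, List.nodup_append']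
    refine ⟨⟨fun hcl => ?_, fun hcm => ?_⟩, ihF subset_rfl,
      ihH ((Finset.erase_subset c C).trans hC), fun v hvl hvm => ?_⟩
    · exact notMem_below_of_subset_children subset_rfl (hF.subset_below c hcl)
    · exact hdisj (Set.mem_insert c _) (hH.subset_below c hcm)
    · exact hdisj (Set.mem_insert_of_mem c (hF.subset_below v hvl)) (hH.subset_below v hvm)

/-- The set `S` is the union of `l` and the vertices recorded elsewhere, in an enclosing pattern. -/
theorem not_blocked_sdiff (h : T.Occurs F C l) (hC : C ⊆ T.children p) {S : Finset V}
    (hS : ∀ w ∈ T.below C, w ∈ S ↔ w ∈ l) :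
    ¬ T.Blocked (C \ S) ∧ ∀ v ∈ l, ¬ T.Blocked (T.children v \ S) := by
  induction h generalizing p with
  | @nil C hC' =>
    have hCS : Disjoint C S := Finset.disjoint_left.2 fun c hc hcS =>
      List.not_mem_nil ((hS c (Rooting.subset_below C hc)).1 hcS)
    rw [Finset.sdiff_eq_self_of_disjoint hCS]
    exact ⟨hC', by simp⟩
  | full => simpa using not_blocked_empty
  | @cons F H C c l m hc hF hH ihF ihH =>
    have hEC := Finset.erase_subset c C
    have hcC : c ∈ T.below C := Rooting.subset_below C hc
    have hdisj := Set.disjoint_left.1 (disjoint_below_erase hC hc)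
    have left (w) (hw : w ∈ T.below (T.children c)) : w ∈ S ↔ w ∈ l := by
      have hwc : w ≠ c := by
        rintro rfl
        exact notMem_below_of_subset_children subset_rfl hw
      have hwm : w ∉ m := fun hwm => hdisj (Set.mem_insert_of_mem c hw) (hH.subset_below w hwm)
      simp [hS w (below_children_subset hcC hw), hwc, hwm]
    have right (w) (hw : w ∈ T.below (C.erase c)) : w ∈ S ↔ w ∈ m := by
      have hwc : w ≠ c := by
        rintro rfl
        exact hdisj (Set.mem_insert w _) hw
      have hwl : w ∉ l := fun hwl => hdisj (Set.mem_insert_of_mem c (hF.subset_below w hwl)) hw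
      simp [hS w (below_mono hEC hw), hwc, hwl]
    have hcS : c ∈ S := (hS c hcC).2 List.mem_cons_self
    obtain ⟨ihF₁, ihF₂⟩ := ihF subset_rfl left
    obtain ⟨ihH₁, ihH₂⟩ := ihH (hEC.trans hC) right
    refine ⟨by rwa [← Finset.insert_erase hc, Finset.insert_sdiff_of_mem _ hcS], fun v hv => ?_⟩
    simp only [List.mem_cons, List.mem_append] at hv
    rcases hv with rfl | hv | hv
    exacts [ihF₁, ihF₂ v hv, ihH₂ v hv]

theorem forall₂_records (h : T.Occurs F C l) {q : ℕ} {pre : List V} (hq : pre[q]? = some p)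
    (hC : C ⊆ T.children p) :
    List.Forall₂ (T.Records (pre ++ l)) (F.nodes q pre.length) l := by
  induction h generalizing p q pre with
  | nil | full => exact .nil
  | @cons F H C c l m hc hF _ ihF ihH =>
    have hq' : (pre ++ c :: l)[q]? = some p := by
      rw [List.getElem?_append_left (List.getElem?_eq_some_iff.1 hq).1, hq]
    have hassoc : pre ++ c :: (l ++ m) = pre ++ [c] ++ l ++ m := by simp
    have hroot : T.Records (pre ++ [c] ++ l) (q, F.IsComplete) c :=
      ⟨⟨p, by simpa using hq', hC hc⟩, fun hFc w hw =>
        List.mem_append_right _ (hF.subset_of_isComplete hFc w hw)⟩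
    have happend (e v) (h : T.Records (pre ++ [c] ++ l) e v) := h.append m
    rw [hassoc]
    refine .cons (happend _ _ hroot) (List.rel_append (.imp happend ?_) ?_)
    · simpa using ihF (q := pre.length) (pre := pre ++ [c]) (by simp) subset_rfl
    · simpa [hF.length_eq, add_assoc, add_comm 1] using
        ihH hq' ((Finset.erase_subset c C).trans hC)

end Occurs

end Rooting

end Patterns

section Certificates

namespace Forest

variable (F : Forest)

/-- The parent number of the vertex `i ≤ F.size` of a pattern and whether its children are all
recorded, where `0` is the vertex above the pattern. By convention `0` is its own parent. -/
def node (i : ℕ) : ℕ × Bool := ((0, false) :: F.nodes 0 1).getD i (0, false)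

/-- Adjacency of the vertices with numbers `i` and `j`. -/
def Adj (i j : ℕ) : Prop := i ≠ 0 ∧ (F.node i).1 = j ∨ j ≠ 0 ∧ (F.node j).1 = i

instance : DecidableRel F.Adj := fun _ _ => inferInstanceAs (Decidable (_ ∨ _))

/-- A test for the vertices with numbers `i` and `j` to be at distance at most `m`. Parents precede
their children, so the larger number is never an ancestor of the smaller one. -/
def WithinDist : (m i j : ℕ) → Bool
  | 0, i, j => i == j
  | m + 1, i, j =>
    i == j || if i < j then WithinDist m i (F.node j).1 else WithinDist m (F.node i).1 j

/-- The map `t` of the numbers `0, …, F.size` describes the placement of the vertices recorded in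
`F`, where the numbers below `b` stay fixed: `b = 0` if the vertex above the pattern is to be moved
by at most `2`, and `b = 1` if it is left alone. -/
structure IsCertificate (b : ℕ) (t : ℕ → ℕ) : Prop where
  eq_iff : ∀ i ≤ F.size, t i = i ↔ i < b
  le : ∀ i ≤ F.size, t i ≤ F.size
  cycle : ∀ i ≤ F.size, ∃ k < 5, t^[k + 1] i = i
  edge : ∀ i ≤ F.size, i ≠ 0 → b ≤ (F.node i).1 →
    ¬ F.Adj (t (F.node i).1) (t i) ∧ F.WithinDist 6 (t (F.node i).1) (t i)
  dist : ∀ i ≤ F.size, F.WithinDist (if (F.node i).2 ∧ (F.node i).1 ≠ 0 then 4 else 3) i (t i)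
  dist_zero : F.WithinDist 2 0 (t 0)
  dist_root : ∀ i ≤ F.size, i ≠ 0 → (F.node i).1 = 0 → F.WithinDist 3 0 (t i)
  inj : ∀ i ≤ F.size, ∀ j ≤ F.size, t i = t j → i = j

instance (b : ℕ) (t : ℕ → ℕ) : Decidable (F.IsCertificate b t) :=
  decidable_of_iff (_ ∧ _ ∧ _ ∧ _ ∧ _ ∧ _ ∧ _ ∧ _)
    ⟨fun ⟨h₁, h₂, h₃, h₄, h₅, h₆, h₇, h₈⟩ => ⟨h₁, h₂, h₃, h₄, h₅, h₆, h₇, h₈⟩,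
      fun ⟨h₁, h₂, h₃, h₄, h₅, h₆, h₇, h₈⟩ => ⟨h₁, h₂, h₃, h₄, h₅, h₆, h₇, h₈⟩⟩

end Forest

theorem exists_perm_of_mapsTo_of_injOn {α β : Type*} {s : Set α} [Finite s] {f : α → β} {t : α → α}
    (hf : s.InjOn f) (ht : s.MapsTo t s) (htinj : s.InjOn t) :
    ∃ σ : Equiv.Perm β, (∀ a ∈ s, σ (f a) = f (t a)) ∧ ∀ b ∉ f '' s, σ b = b := by
  classical
  let π : Equiv.Perm s :=
    .ofBijective (ht.restrict t s s) (Finite.injective_iff_bijective.1 (ht.restrict_inj.2 htinj))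
  let e : s ≃ f '' s := Equiv.Set.imageOfInjOn f s hf
  exact ⟨π.extendDomain e, fun a ha => π.extendDomain_apply_image e ⟨a, ha⟩,
    fun b => π.extendDomain_apply_not_subtype e⟩

theorem pow_apply_eq_apply_iterate {α β : Type*} {s : Set α} {f : α → β} {t : α → α}
    {σ : Equiv.Perm β} (hσ : ∀ a ∈ s, σ (f a) = f (t a)) (ht : s.MapsTo t s) {a : α} (ha : a ∈ s)
    (k : ℕ) : (σ ^ k) (f a) = f (t^[k] a) := by
  induction k generalizing a with
  | zero => rfl
  | succ k ih =>
    rw [pow_succ, Equiv.Perm.mul_apply, hσ a ha, ih (ht ha), Function.iterate_succ_apply]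

namespace Rooting

variable {V : Type*} {G : SimpleGraph V} (T : Rooting G)

/-- `f` numbers the vertices `S` recorded in an occurrence of the pattern `F` at a set `C` of
children of `p`, with `p` as number `0`. -/
structure IsCopy [DecidableEq V] (F : Forest) (p : V) (C S : Finset V) (f : ℕ → V) : Prop where
  zero : f 0 = p
  injOn : (Set.Iic F.size).InjOn f
  mem_iff : ∀ v, v ∈ S ↔ ∃ i ≤ F.size, f i = v
  parent_le : ∀ i ≤ F.size, (F.node i).1 ≤ F.size
  mem_children : ∀ i ≤ F.size, i ≠ 0 → f i ∈ T.children (f (F.node i).1)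
  children_subset : ∀ i ≤ F.size, (F.node i).2 → T.children (f i) ⊆ S
  mem_below : ∀ i ≤ F.size, i ≠ 0 → f i ∈ T.below C
  not_blocked : ∀ v ∈ S, ¬ T.Blocked (Function.update T.children p C v \ S)

variable [DecidableEq V] {T} {F : Forest} {p : V} {C S : Finset V} {f : ℕ → V} {l : List V}

theorem Occurs.not_blocked_update_sdiff (h : T.Occurs F C l) (hC : C ⊆ T.children p) :
    ∀ v ∈ p :: l, ¬ T.Blocked (Function.update T.children p C v \ (p :: l).toFinset) := by
  have hp : p ∉ T.below C := notMem_below_of_subset_children hC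
  have hS (w) (hw : w ∈ T.below C) : w ∈ (p :: l).toFinset ↔ w ∈ l := by
    simp [ne_of_mem_of_not_mem hw hp]
  obtain ⟨hroot, hl⟩ := h.not_blocked_sdiff hC hS
  rintro v (_ | ⟨_, hv⟩)
  · rwa [Function.update_self]
  · rw [Function.update_of_ne (ne_of_mem_of_not_mem (h.subset_below v hv) hp)]
    exact hl v hv

theorem Occurs.records_node (h : T.Occurs F C l) (hC : C ⊆ T.children p) {i : ℕ}
    (hi : i < l.length) : T.Records (p :: l) (F.node (i + 1)) l[i] := by
  have hrec : List.Forall₂ (T.Records (p :: l)) (F.nodes 0 1) l :=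
    h.forall₂_records (pre := [p]) rfl hC
  obtain ⟨hlen, hrec⟩ := List.forall₂_iff_get.1 hrec
  rw [Forest.node, List.getD_cons_succ, List.getD_eq_getElem _ _ (by omega)]
  exact hrec i (by omega) hi

theorem Occurs.nodup_cons (h : T.Occurs F C l) (hC : C ⊆ T.children p) : (p :: l).Nodup :=
  List.nodup_cons.2
    ⟨fun hp => notMem_below_of_subset_children hC (h.subset_below p hp), h.nodup hC⟩

theorem Occurs.exists_isCopy (h : T.Occurs F C l) (hC : C ⊆ T.children p) :
    ∃ f, T.IsCopy F p C (p :: l).toFinset f := by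
  have hl : l.length = F.size := h.length_eq
  have hlen : (p :: l).length = F.size + 1 := congrArg (· + 1) hl
  let f (i : ℕ) : V := (p :: l).getD i p
  have hf {i} (hi : i ≤ F.size) : f i = (p :: l)[i] := List.getD_eq_getElem _ _ (by omega)
  have hfl {i} (hi : i + 1 ≤ F.size) : f (i + 1) ∈ l := by
    rw [hf hi, List.getElem_cons_succ]
    exact List.getElem_mem _
  have hrecord {i} (hi : i + 1 ≤ F.size) : T.Records (p :: l) (F.node (i + 1)) (f (i + 1)) := by
    rw [hf hi]
    exact h.records_node hC (by omega)
  have hparent {i} (hi : i + 1 ≤ F.size) : (F.node (i + 1)).1 ≤ F.size ∧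
      f (i + 1) ∈ T.children (f (F.node (i + 1)).1) := by
    obtain ⟨⟨u, hu, huv⟩, -⟩ := hrecord hi
    obtain ⟨hlt, rfl⟩ := List.getElem?_eq_some_iff.1 hu
    have hle : (F.node (i + 1)).1 ≤ F.size := by omega
    exact ⟨hle, hf hle ▸ huv⟩
  have hzero : F.node 0 = (0, false) := rfl
  refine ⟨f, ⟨rfl, fun i hi j hj hij => ?_, fun v => ?_, ?_, ?_, ?_, ?_, ?_⟩⟩
  · rwa [hf hi, hf hj, (h.nodup_cons hC).getElem_inj_iff] at hij
  · rw [List.mem_toFinset, List.mem_iff_getElem]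
    exact ⟨fun ⟨i, hi, e⟩ => ⟨i, by omega, (hf (by omega)).trans e⟩,
      fun ⟨i, hi, e⟩ => ⟨i, by omega, (hf hi).symm.trans e⟩⟩
  · rintro (_ | i) hi
    exacts [hi, (hparent hi).1]
  · rintro (_ | i) hi h0
    exacts [absurd rfl h0, (hparent hi).2]
  · rintro (_ | i) hi hb w hw
    · simp [hzero] at hb
    · exact List.mem_toFinset.2 ((hrecord hi).2 hb w hw)
  · rintro (_ | i) hi h0
    exacts [absurd rfl h0, h.subset_below _ (hfl hi)]
  · exact fun v hv => h.not_blocked_update_sdiff hC v (List.mem_toFinset.1 hv)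

namespace IsCopy

theorem isSubtree (h : T.IsCopy F p C S f) (hC : C ⊆ T.children p) : T.IsSubtree p S where
  mem := (h.mem_iff p).2 ⟨0, Nat.zero_le _, h.zero⟩
  exists_parent w hw hwp := by
    obtain ⟨i, hi, rfl⟩ := (h.mem_iff w).1 hw
    have hi0 : i ≠ 0 := by
      rintro rfl
      exact hwp h.zero
    exact ⟨_, (h.mem_iff _).2 ⟨_, h.parent_le i hi, rfl⟩, h.mem_children i hi hi0⟩
  depth_le w hw := by
    obtain ⟨i, hi, rfl⟩ := (h.mem_iff w).1 hw
    rcases eq_or_ne i 0 with rfl | hi0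
    · rw [h.zero]
    · exact (depth_lt_of_mem_below_children (below_mono hC (h.mem_below i hi hi0))).le

theorem parent_eq_of_mem_children (h : T.IsCopy F p C S f) (hC : C ⊆ T.children p) {i j : ℕ}
    (hi : i ≤ F.size) (hj : j ≤ F.size) (hij : f j ∈ T.children (f i)) :
    j ≠ 0 ∧ (F.node j).1 = i := by
  have hj0 : j ≠ 0 := by
    rintro rfl
    have hd := T.depth_child hij
    have := (h.isSubtree hC).depth_le (f i) ((h.mem_iff _).2 ⟨i, hi, rfl⟩)
    rw [h.zero] at hd
    omega
  exact ⟨hj0, h.injOn (h.parent_le j hj) hi (T.parent_unique (h.mem_children j hj hj0) hij)⟩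

theorem adj_iff (h : T.IsCopy F p C S f) (hC : C ⊆ T.children p) {i j : ℕ} (hi : i ≤ F.size)
    (hj : j ≤ F.size) : G.Adj (f i) (f j) ↔ F.Adj i j := by
  rw [T.adj_iff, Forest.Adj]
  constructor
  · rintro (hij | hij)
    · exact .inr (h.parent_eq_of_mem_children hC hi hj hij)
    · exact .inl (h.parent_eq_of_mem_children hC hj hi hij)
  · rintro (⟨h0, rfl⟩ | ⟨h0, rfl⟩)
    · exact .inr (h.mem_children i hi h0)
    · exact .inl (h.mem_children j hj h0)

theorem dist_le (h : T.IsCopy F p C S f) (hG : G.Connected) {m i j : ℕ} (hi : i ≤ F.size)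
    (hj : j ≤ F.size) (hm : F.WithinDist m i j) : G.dist (f i) (f j) ≤ m := by
  induction m generalizing i j with
  | zero =>
    obtain rfl : i = j := by simpa [Forest.WithinDist] using hm
    exact dist_self.le
  | succ m ih =>
    have climb {i} (hi : i ≤ F.size) (h0 : i ≠ 0) : G.dist (f i) (f (F.node i).1) = 1 :=
      dist_eq_one_iff_adj.2 (adj_of_mem_children (h.mem_children i hi h0)).symm
    rcases eq_or_ne i j with rfl | hij
    · exact dist_self.le.trans (Nat.zero_le _)
    rw [Forest.WithinDist, Bool.or_eq_true, beq_iff_eq, or_iff_right hij] at hm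
    split at hm
    · calc G.dist (f i) (f j)
        _ ≤ G.dist (f i) (f (F.node j).1) + G.dist (f (F.node j).1) (f j) := hG.dist_triangle
        _ ≤ m + 1 := Nat.add_le_add (ih hi (h.parent_le j hj) hm)
          (G.dist_comm ▸ (climb hj (by omega)).le)
    · calc G.dist (f i) (f j)
        _ ≤ G.dist (f i) (f (F.node i).1) + G.dist (f (F.node i).1) (f j) := hG.dist_triangle
        _ ≤ 1 + m := Nat.add_le_add (climb hi (by omega)).le (ih (h.parent_le i hi) hj hm)
        _ = m + 1 := Nat.add_comm 1 m

theorem not_adj_and_dist_le (h : T.IsCopy F p C S f) (hG : G.Connected) (hC : C ⊆ T.children p)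
    {b : ℕ} {t : ℕ → ℕ} (ht : F.IsCertificate b t) {i j : ℕ} (hi : i ∈ Set.Icc b F.size)
    (hj : j ∈ Set.Icc b F.size) (hij : G.Adj (f i) (f j)) :
    ¬ G.Adj (f (t i)) (f (t j)) ∧ G.dist (f (t i)) (f (t j)) ≤ 6 := by
  rw [h.adj_iff hC (ht.le i hi.2) (ht.le j hj.2)]
  rcases (h.adj_iff hC hi.2 hj.2).1 hij with ⟨h0, rfl⟩ | ⟨h0, rfl⟩
  · obtain ⟨hadj, hdist⟩ := ht.edge i hi.2 h0 hj.1
    rw [G.dist_comm]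
    exact ⟨fun e => hadj (Or.symm e), h.dist_le hG (ht.le _ hj.2) (ht.le i hi.2) hdist⟩
  · obtain ⟨hadj, hdist⟩ := ht.edge j hj.2 h0 hi.1
    exact ⟨hadj, h.dist_le hG (ht.le _ hi.2) (ht.le j hj.2) hdist⟩

theorem exists_isPlacementOn (h : T.IsCopy F p C S f) (hG : G.Connected) (hC : C ⊆ T.children p)
    {b : ℕ} {t : ℕ → ℕ} (ht : F.IsCertificate b t) :
    ∃ σ, IsPlacementOn G (f '' Set.Icc b F.size) σ ∧ ∀ i ≤ F.size, σ (f i) = f (t i) := by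
  obtain ⟨σ, hσ, hσ'⟩ := exists_perm_of_mapsTo_of_injOn h.injOn
    (fun i hi => ht.le i hi) (fun i hi j hj => ht.inj i hi j hj)
  have cases (v) : (∃ i ≤ F.size, f i = v) ∨ v ∉ f '' Set.Iic F.size := em _
  refine ⟨σ, ⟨fun v => ?_, ?_, ?_, fun v => ?_, fun v => ?_⟩, hσ⟩
  · rcases cases v with ⟨i, hi, rfl⟩ | hv
    · rw [hσ i hi, (h.injOn).ne_iff (ht.le i hi) hi, Ne, ht.eq_iff i hi, not_lt,
        h.injOn.mem_image_iff Set.Icc_subset_Iic_self hi]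
      exact ⟨fun hb => ⟨hb, hi⟩, And.left⟩
    · simp only [hσ' v hv, ne_eq, not_true_eq_false, false_iff]
      exact fun hv' => hv (Set.image_mono Set.Icc_subset_Iic_self hv')
  · rintro _ _ ⟨i, hi, rfl⟩ ⟨j, hj, rfl⟩ hij
    rw [hσ i hi.2, hσ j hj.2]
    exact (h.not_adj_and_dist_le hG hC ht hi hj hij).1
  · rintro _ _ ⟨i, hi, rfl⟩ ⟨j, hj, rfl⟩ hij
    rw [hσ i hi.2, hσ j hj.2]
    exact (h.not_adj_and_dist_le hG hC ht hi hj hij).2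
  · rcases cases v with ⟨i, hi, rfl⟩ | hv
    · rw [hσ i hi]
      exact (h.dist_le hG hi (ht.le i hi) (ht.dist i hi)).trans (by split <;> omega)
    · rw [hσ' v hv, dist_self]
      exact Nat.zero_le 4
  · rcases cases v with ⟨i, hi, rfl⟩ | hv
    · obtain ⟨k, hk, e⟩ := ht.cycle i hi
      exact ⟨k + 1, k.succ_pos, hk, by rw [pow_apply_eq_apply_iterate hσ ht.le hi, e]⟩
    · exact ⟨1, by simp [hσ' v hv]⟩

end IsCopy

end Rooting

end Certificates

section Tables

namespace Forest

/-- The pattern of a single vertex whose children match `F`. -/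
def only (F : Forest) : Forest := cons F full

/-- The patterns of `n` siblings whose children each match a member of a list. -/
def combinations : ℕ → List Forest → List Forest
  | 0, _ => [full]
  | n + 1, L => L.tails.flatMap fun
    | [] => []
    | F :: L' => (combinations n (F :: L')).map (cons F)

/-- Patterns for a set of leaves. -/
def leafSetForests : List Forest := [nil, only full]

/-- Patterns for the children of a star vertex. -/
def starForests : List Forest := nil :: leafSetForests.map only

/-- Patterns for the children of an arbitrary vertex. -/
def vertexForests : List Forest := nil :: starForests.map only

/-- Patterns for a nonempty set of leaves. -/
def nonemptyLeafSetForests : List Forest := leafSetForests.map (cons full)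

/-- Patterns for the children of a vertex that is not a star vertex. -/
def nonStarForests : List Forest := nil :: nonemptyLeafSetForests.map (only ∘ only)

/-- Patterns for the nonempty sets that do not split into smaller unblocked sets. -/
def hangForests : List Forest :=
  combinations 2 starForests ++ combinations 3 starForests ++
    starForests.flatMap fun S => nonStarForests.map (cons S ∘ only)

/-- Patterns for a nonempty set of siblings. -/
def siblingForests : List Forest := vertexForests.map (cons · nil) ++ combinations 2 starForests

/-- Patterns for a set of siblings containing a star vertex and a vertex that is not a leaf, the
other siblings being unblocked. -/
def junctionForests : List Forest :=
  siblingForests.map (fun F => cons nil (cons F nil)) ++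
    leafSetForests.flatMap fun S => vertexForests.map fun F => cons (only S) (cons F nil)

/-- Patterns for the children of a vertex that is not a star vertex, detailed enough to place the
vertex itself. -/
def rootForests : List Forest :=
  siblingForests.map (fun F => cons (cons F nil) nil) ++ junctionForests.map (cons · nil) ++
    junctionForests ++
    nonemptyLeafSetForests.flatMap fun F => (combinations 2 leafSetForests).map (cons F)

/-- Placements of the members of `hangForests`, each listing the images of `0, 1, …`; they were
found by computer search. -/
def hangCertificates : List (List ℕ) :=
  [[0, 2, 1], [0, 2, 3, 1], [0, 2, 3, 4, 1], [0, 2, 4, 1, 3], [0, 3, 1, 4, 2], [0, 2, 3, 4, 5, 1],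
    [0, 2, 3, 5, 1, 4], [0, 2, 4, 1, 5, 3], [0, 2, 1, 4, 6, 3, 5], [0, 2, 4, 1, 3, 6, 5],
    [0, 3, 4, 1, 6, 2, 5], [0, 4, 1, 5, 2, 6, 3], [0, 4, 5, 6, 1, 2, 3], [0, 2, 1, 4, 5, 7, 3, 6],
    [0, 2, 3, 1, 5, 7, 4, 6], [0, 2, 3, 5, 1, 4, 7, 6], [0, 3, 4, 1, 6, 2, 7, 5],
    [0, 2, 3, 1, 5, 6, 8, 4, 7], [0, 3, 4, 1, 6, 2, 5, 8, 7], [0, 3, 1, 4, 2, 6, 7, 9, 5, 8]]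

/-- Placements of the members of `rootForests`, encoded like `hangCertificates`. -/
def rootCertificates : List (List ℕ) :=
  [[1, 2, 3, 0], [1, 3, 0, 2], [2, 3, 1, 0], [1, 2, 3, 4, 0], [1, 2, 4, 0, 3], [1, 3, 0, 4, 2],
    [1, 3, 4, 2, 0], [1, 4, 0, 2, 3], [2, 3, 1, 4, 0], [2, 4, 3, 1, 0], [1, 3, 4, 0, 5, 2],
    [1, 3, 5, 0, 2, 4], [1, 4, 0, 5, 2, 3], [1, 4, 3, 5, 0, 2], [1, 4, 5, 0, 3, 2],
    [1, 4, 5, 2, 0, 3], [2, 0, 5, 4, 3, 1], [2, 3, 0, 5, 1, 4], [2, 4, 1, 5, 0, 3],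
    [2, 4, 3, 0, 5, 1], [2, 5, 0, 4, 1, 3], [1, 2, 3, 5, 6, 0, 4], [1, 2, 4, 5, 0, 6, 3],
    [1, 2, 4, 6, 0, 3, 5], [1, 3, 4, 0, 6, 2, 5], [1, 3, 5, 0, 2, 6, 4], [1, 3, 5, 0, 6, 2, 4],
    [1, 3, 5, 4, 0, 6, 2], [1, 3, 6, 0, 2, 4, 5], [1, 4, 0, 5, 2, 6, 3], [1, 4, 0, 6, 2, 3, 5],
    [1, 4, 3, 2, 5, 6, 0], [1, 4, 5, 0, 6, 2, 3], [2, 0, 4, 5, 1, 6, 3], [1, 2, 3, 0, 5, 7, 4, 6],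
    [1, 3, 0, 2, 5, 7, 4, 6], [1, 3, 0, 7, 5, 6, 4, 2], [1, 3, 5, 4, 0, 7, 2, 6],
    [1, 4, 0, 5, 2, 7, 3, 6], [1, 4, 0, 6, 2, 3, 7, 5], [1, 4, 0, 7, 2, 3, 5, 6],
    [1, 5, 3, 2, 7, 0, 4, 6], [1, 2, 3, 0, 5, 6, 8, 4, 7], [1, 3, 0, 2, 5, 6, 8, 4, 7],
    [1, 3, 0, 4, 2, 6, 8, 5, 7], [1, 4, 0, 6, 2, 3, 8, 5, 7], [1, 4, 0, 2, 3, 6, 7, 9, 5, 8]]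

theorem exists_isCertificate_of_mem_hangForests :
    ∀ F ∈ hangForests, F.IsComplete ∧ ∃ t ∈ hangCertificates, F.IsCertificate 1 (t.getD · 0) := by
  decide +kernel

theorem exists_isCertificate_of_mem_rootForests :
    ∀ F ∈ rootForests, ∃ t ∈ rootCertificates, F.IsCertificate 0 (t.getD · 0) := by
  decide +kernel

end Forest

end Tables

section Matching

namespace Rooting

variable {V : Type*} [DecidableEq V] {G : SimpleGraph V} (T : Rooting G)

/-- The set of siblings `C` matches the pattern `F`. -/
def Matches (F : Forest) (C : Finset V) : Prop := ∃ l, T.Occurs F C l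

/-- Every set of children of `v` that is not blocked can be hung. -/
def HangsUnblocked (v : V) : Prop := ∀ C ⊆ T.children v, ¬ T.Blocked C → T.Hangs v C

variable {T} {F : Forest} {C : Finset V} {p v : V}

theorem update_children_sdiff_subset (hC : C ⊆ T.children p) (S : Finset V) (v : V) :
    Function.update T.children p C v \ S ⊆ T.children v := by
  refine Finset.sdiff_subset.trans ?_
  rcases eq_or_ne v p with rfl | hvp
  · rwa [Function.update_self]
  · rw [Function.update_of_ne hvp]

namespace IsCopy

variable {S : Finset V} {f : ℕ → V}

theorem dist_le_three (h : T.IsCopy F p C S f) (hG : G.Connected) {b : ℕ} {t : ℕ → ℕ}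
    (ht : F.IsCertificate b t) {i : ℕ} (hi : i ≤ F.size)
    (hi3 : (F.node i).2 → (F.node i).1 = 0) : G.dist (f i) (f (t i)) ≤ 3 := by
  have := ht.dist i hi
  rw [if_neg fun h => h.2 (hi3 h.1)] at this
  exact h.dist_le hG hi (ht.le i hi) this

theorem parent_eq_zero_of_nonempty (h : T.IsCopy F p C S f) {i : ℕ} (hi : i ≤ F.size)
    (hne : (Function.update T.children p C (f i) \ S).Nonempty) (hclosed : (F.node i).2) :
    (F.node i).1 = 0 := by
  by_contra h0
  have hip : f i ≠ p := by
    intro e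
    obtain rfl := h.injOn hi (Nat.zero_le _) (e.trans h.zero.symm)
    exact h0 rfl
  rw [Function.update_of_ne hip,
    Finset.sdiff_eq_empty_iff_subset.2 (h.children_subset i hi hclosed)] at hne
  exact Finset.not_nonempty_empty hne

theorem exists_isPlacementOn_union_below (h : T.IsCopy F p C S f) (hG : G.Connected)
    (hC : C ⊆ T.children p) {b : ℕ} (hb : b ≤ 1) {t : ℕ → ℕ} (ht : F.IsCertificate b t)
    (hang : ∀ v ∈ S, T.Hangs v (Function.update T.children p C v \ S)) :
    ∃ σ, IsPlacementOn G
        (f '' Set.Icc b F.size ∪ ⋃ v ∈ S, T.below (Function.update T.children p C v \ S)) σ ∧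
      (∀ i ∈ Set.Icc b F.size, σ (f i) = f (t i)) ∧
      ∀ c ∈ C, G.dist p (σ c) ≤ 3 ∧ G.dist c (σ c) ≤ 3 := by
  obtain ⟨σ₀, hσ₀, hσ₀t⟩ := h.exists_isPlacementOn hG hC ht
  have hAS : f '' Set.Icc b F.size ⊆ S := by
    rintro _ ⟨i, hi, rfl⟩
    exact (h.mem_iff _).2 ⟨i, hi.2, rfl⟩
  have hdist (v) (hv : v ∈ S) (hne : (Function.update T.children p C v \ S).Nonempty) :
      G.dist v (σ₀ v) ≤ 3 := by
    obtain ⟨i, hi, rfl⟩ := (h.mem_iff v).1 hv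
    rw [hσ₀t i hi]
    exact h.dist_le_three hG ht hi (h.parent_eq_zero_of_nonempty hi hne)
  obtain ⟨σ, hσ, hσσ₀, hσD⟩ := (h.isSubtree hC).exists_isPlacementOn_glue hG hAS hσ₀
    (fun v _ => update_children_sdiff_subset hC S v) (fun _ _ => Finset.sdiff_disjoint) hang hdist
  have hσt (i) (hi : i ∈ Set.Icc b F.size) : σ (f i) = f (t i) :=
    (hσσ₀ _ (Set.mem_image_of_mem f hi)).trans (hσ₀t i hi.2)
  refine ⟨σ, hσ, hσt, fun c hc => ?_⟩
  by_cases hcS : c ∈ S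
  · obtain ⟨i, hi, rfl⟩ := (h.mem_iff c).1 hcS
    obtain ⟨h0, hi0⟩ := h.parent_eq_of_mem_children hC (Nat.zero_le _) hi (h.zero ▸ hC hc)
    rw [hσt i ⟨by omega, hi⟩]
    refine ⟨?_, h.dist_le_three hG ht hi fun _ => hi0⟩
    rw [← h.zero]
    exact h.dist_le hG (Nat.zero_le _) (ht.le i hi) (ht.dist_root i hi h0 hi0)
  · exact hσD p (h.isSubtree hC).mem c (by simp [hc, hcS])

theorem mem_below_of_ne (h : T.IsCopy F p C S f) (hv : v ∈ S) (hvp : v ≠ p) : v ∈ T.below C := by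
  obtain ⟨i, hi, rfl⟩ := (h.mem_iff v).1 hv
  exact h.mem_below i hi fun h0 => hvp (h0 ▸ h.zero)

theorem hangs_sdiff (h : T.IsCopy F p C S f) (hp : T.Hangs p (C \ S))
    (hang : ∀ v ∈ T.below C, T.HangsUnblocked v) (v : V) (hv : v ∈ S) :
    T.Hangs v (Function.update T.children p C v \ S) := by
  rcases eq_or_ne v p with rfl | hvp
  · rwa [Function.update_self]
  · have := h.not_blocked v hv
    rw [Function.update_of_ne hvp] at this ⊢
    exact hang v (h.mem_below_of_ne hv hvp) _ Finset.sdiff_subset this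

theorem image_Icc_one (h : T.IsCopy F p C S f) : f '' Set.Icc 1 F.size = ↑S \ {p} := by
  ext v
  simp only [Set.mem_image, Set.mem_Icc, Set.mem_sdiff, Finset.mem_coe, Set.mem_singleton_iff,
    h.mem_iff, Nat.one_le_iff_ne_zero]
  constructor
  · rintro ⟨i, ⟨h0, hi⟩, rfl⟩
    exact ⟨⟨i, hi, rfl⟩, fun e => h0 (h.injOn hi (Nat.zero_le _) (e.trans h.zero.symm))⟩
  · rintro ⟨⟨i, hi, rfl⟩, hp⟩
    exact ⟨i, ⟨fun h0 => hp (h0 ▸ h.zero), hi⟩, rfl⟩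

theorem image_Icc_zero (h : T.IsCopy F p C S f) : f '' Set.Icc 0 F.size = S := by
  ext v
  simp [h.mem_iff]

end IsCopy

theorem Matches.hangs (h : T.Matches F C) (hG : G.Connected) (hC : C ⊆ T.children p)
    (hF : F.IsComplete) {t : ℕ → ℕ} (ht : F.IsCertificate 1 t)
    (hang : ∀ v ∈ T.below C, T.HangsUnblocked v) : T.Hangs p C := by
  obtain ⟨l, hl⟩ := h
  obtain ⟨f, hf⟩ := hl.exists_isCopy hC
  have hCS : C \ (p :: l).toFinset = ∅ := Finset.sdiff_eq_empty_iff_subset.2 fun c hc =>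
    List.mem_toFinset.2 (List.mem_cons_of_mem p (hl.subset_of_isComplete hF c hc))
  obtain ⟨σ, hσ, -, hσC⟩ := hf.exists_isPlacementOn_union_below hG hC le_rfl ht
    (hf.hangs_sdiff (hCS ▸ .empty p) hang)
  rw [hf.image_Icc_one, ← (hf.isSubtree hC).below_eq hC fun v => hf.mem_below_of_ne] at hσ
  exact ⟨σ, hσ, hσC⟩

theorem Matches.hasWell (h : T.Matches F (T.children p)) (hG : G.Connected) {t : ℕ → ℕ}
    (ht : F.IsCertificate 0 t) (hang : ∀ v ∈ T.below {p}, T.HangsUnblocked v) : T.HasWell p := by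
  obtain ⟨l, hl⟩ := h
  obtain ⟨f, hf⟩ := hl.exists_isCopy subset_rfl
  have hpS : p ∈ (p :: l).toFinset := (hf.isSubtree subset_rfl).mem
  rw [below_singleton_eq, Set.forall_mem_insert] at hang
  have hroot : T.Hangs p (T.children p \ (p :: l).toFinset) :=
    hang.1 _ Finset.sdiff_subset (by simpa using hf.not_blocked p hpS)
  obtain ⟨σ, hσ, hσt, hσC⟩ := hf.exists_isPlacementOn_union_below hG subset_rfl zero_le_one ht
    (hf.hangs_sdiff hroot hang.2)
  have hbelow := (hf.isSubtree subset_rfl).below_eq subset_rfl fun v => hf.mem_below_of_ne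
  refine ⟨σ, ?_, ?_, fun c hc => (hσC c hc).2⟩
  · rwa [below_singleton_eq, hbelow, ← Set.insert_union, Set.insert_sdiff_singleton,
      Set.insert_eq_of_mem (Finset.mem_coe.2 hpS), ← hf.image_Icc_zero]
  · rw [← hf.zero, hσt 0 ⟨le_rfl, Nat.zero_le _⟩]
    exact hf.dist_le hG (Nat.zero_le _) (ht.le 0 (Nat.zero_le _)) ht.dist_zero

end Rooting

end Matching

section Cases

open Forest

namespace Rooting

variable {V : Type*} [DecidableEq V] {G : SimpleGraph V} (T : Rooting G)

/-- The set of siblings `C` matches one of the patterns in `L`. -/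
def MatchesAny (L : List Forest) (C : Finset V) : Prop := ∃ F ∈ L, T.Matches F C

variable {T} {F H : Forest} {L : List Forest} {C : Finset V} {c p s v w x z : V}

theorem Matches.nil (h : ¬ T.Blocked C) : T.Matches .nil C := ⟨[], .nil h⟩

theorem Matches.full : T.Matches .full ∅ := ⟨[], .full⟩

theorem Matches.cons (hc : c ∈ C) (hF : T.Matches F (T.children c))
    (hH : T.Matches H (C.erase c)) : T.Matches (.cons F H) C :=
  let ⟨l, hl⟩ := hF
  let ⟨m, hm⟩ := hH
  ⟨c :: (l ++ m), .cons hc hl hm⟩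

theorem Matches.only (h : T.Matches F (T.children c)) : T.Matches (only F) {c} :=
  .cons (Finset.mem_singleton_self c) h (by simpa using .full)

theorem MatchesAny.only (h : T.MatchesAny L (T.children c)) : T.MatchesAny (L.map only) {c} :=
  let ⟨_, hF, hm⟩ := h
  ⟨_, List.mem_map_of_mem hF, hm.only⟩

theorem matchesAny_combinations {n : ℕ} (hcard : C.card = n)
    (h : ∀ c ∈ C, T.MatchesAny L (T.children c)) : T.MatchesAny (combinations n L) C := by
  induction n generalizing C L with
  | zero =>
    obtain rfl := Finset.card_eq_zero.1 hcard
    exact ⟨_, List.mem_singleton_self _, .full⟩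
  | succ n ihn =>
    induction L with
    | nil =>
      obtain ⟨c, hc⟩ := Finset.card_pos.1 (n.succ_pos.trans_le hcard.ge)
      obtain ⟨F, hF, -⟩ := h c hc
      cases hF
    | cons F L ihL =>
      have hsucc : combinations (n + 1) (F :: L) =
        (combinations n (F :: L)).map (.cons F) ++ combinations (n + 1) L := by
        simp [combinations]
      rw [hsucc]
      by_cases hF : ∃ c ∈ C, T.Matches F (T.children c)
      · obtain ⟨c, hc, hcF⟩ := hF
        obtain ⟨H, hH, hCH⟩ := ihn (L := F :: L) (C := C.erase c)
          (by rw [Finset.card_erase_of_mem hc, hcard, Nat.add_sub_cancel])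
          fun d hd => h d (Finset.mem_of_mem_erase hd)
        exact ⟨_, List.mem_append_left _ (List.mem_map_of_mem hH), hcF.cons hc hCH⟩
      · obtain ⟨H, hH, hCH⟩ := ihL fun c hc => by
          obtain ⟨K, hK, hcK⟩ := h c hc
          rcases List.mem_cons.1 hK with rfl | hK
          exacts [absurd ⟨c, hc, hcK⟩ hF, ⟨K, hK, hcK⟩]
        exact ⟨H, List.mem_append_right _ hH, hCH⟩

theorem matchesAny_leafSetForests (h : ∀ c ∈ C, T.children c = ∅) :
    T.MatchesAny leafSetForests C := by
  by_cases hC : T.Blocked C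
  · obtain ⟨c, rfl, -⟩ := hC
    have hc : T.Matches full (T.children c) := h c (Finset.mem_singleton_self c) ▸ .full
    exact ⟨only full, by decide, hc.only⟩
  · exact ⟨nil, by decide, .nil hC⟩

theorem matchesAny_nonemptyLeafSetForests (hne : C.Nonempty) (h : ∀ c ∈ C, T.children c = ∅) :
    T.MatchesAny nonemptyLeafSetForests C := by
  obtain ⟨c, hc⟩ := hne
  have hfull : T.Matches full (T.children c) := h c hc ▸ .full
  obtain ⟨F, hF, hm⟩ := matchesAny_leafSetForests fun d hd => h d (Finset.mem_of_mem_erase hd)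
  exact ⟨_, List.mem_map_of_mem hF, hfull.cons hc hm⟩

theorem IsStar.matchesAny (hs : T.IsStar s) : T.MatchesAny starForests (T.children s) := by
  by_cases hC : T.Blocked (T.children s)
  · obtain ⟨c, hc, -⟩ := hC
    have hleaf : ∀ e ∈ T.children c, T.children e = ∅ := by
      rcases hs with hs | ⟨d, hd, hs⟩
      · simp [hs c (hc ▸ Finset.mem_singleton_self c)]
      · exact Finset.singleton_injective (hc ▸ hd : {c} = {d}) ▸ hs
    obtain ⟨F, hF, hm⟩ := (matchesAny_leafSetForests hleaf).only
    exact ⟨F, List.mem_cons_of_mem _ hF, hc ▸ hm⟩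
  · exact ⟨nil, List.mem_cons_self, .nil hC⟩

theorem matchesAny_nonStarForests (hv : ¬ T.IsStar v) :
    T.MatchesAny nonStarForests (T.children v) := by
  by_cases hC : T.Blocked (T.children v)
  · obtain ⟨s, hs, hstar⟩ := hC
    have hs' : ¬ ∀ c ∈ T.children s, T.children c = ∅ := fun h => hv (.inr ⟨s, hs, h⟩)
    obtain ⟨w, hw, hleaf⟩ := hstar.resolve_left hs'
    have hne : (T.children w).Nonempty := by
      rw [Finset.nonempty_iff_ne_empty]
      rintro h
      exact hs' (by simp [hw, h])
    obtain ⟨F, hF, hm⟩ := matchesAny_nonemptyLeafSetForests hne hleaf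
    refine ⟨_, List.mem_cons_of_mem _ (List.mem_map_of_mem hF), hs ▸ .only (hw ▸ hm.only)⟩
  · exact ⟨nil, List.mem_cons_self, .nil hC⟩

theorem matchesAny_vertexForests (v : V) : T.MatchesAny vertexForests (T.children v) := by
  by_cases hC : T.Blocked (T.children v)
  · obtain ⟨s, hs, hstar⟩ := hC
    obtain ⟨F, hF, hm⟩ := hstar.matchesAny.only
    exact ⟨F, List.mem_cons_of_mem _ hF, hs ▸ hm⟩
  · exact ⟨nil, List.mem_cons_self, .nil hC⟩

theorem card_eq_two_of_forall_blocked_erase (hC : C.Nonempty)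
    (h : ∀ c ∈ C, T.Blocked (C.erase c)) : C.card = 2 ∧ ∀ c ∈ C, T.IsStar c := by
  have other {c} (hc : c ∈ C) : ∃ d ∈ C, C.erase c = {d} := by
    obtain ⟨d, hd, -⟩ := h c hc
    exact ⟨d, Finset.mem_of_mem_erase (hd ▸ Finset.mem_singleton_self d), hd⟩
  constructor
  · obtain ⟨c, hc⟩ := hC
    obtain ⟨d, -, hd⟩ := other hc
    rw [← Finset.card_erase_add_one hc, hd, Finset.card_singleton]
  · intro c hc
    obtain ⟨d, hdC, hd⟩ := other hc
    obtain ⟨e, he, hstar⟩ := h d hdC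
    have hdc : d ≠ c := (Finset.mem_erase.1 (hd ▸ Finset.mem_singleton_self d)).1
    have hce : c ∈ C.erase d := Finset.mem_erase.2 ⟨hdc.symm, hc⟩
    rw [he, Finset.mem_singleton] at hce
    exact hce ▸ hstar

theorem matchesAny_siblingForests (hC : C.Nonempty) : T.MatchesAny siblingForests C := by
  by_cases hrest : ∀ c ∈ C, T.Blocked (C.erase c)
  · obtain ⟨hcard, hstar⟩ := card_eq_two_of_forall_blocked_erase hC hrest
    obtain ⟨F, hF, hm⟩ := matchesAny_combinations hcard fun c hc => (hstar c hc).matchesAny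
    exact ⟨F, List.mem_append_right _ hF, hm⟩
  · push Not at hrest
    obtain ⟨c, hc, hrest⟩ := hrest
    obtain ⟨F, hF, hm⟩ := matchesAny_vertexForests (T := T) c
    exact ⟨_, List.mem_append_left _ (List.mem_map_of_mem hF), hm.cons hc (.nil hrest)⟩

theorem matchesAny_junctionForests (hs : s ∈ C) (hstar : T.IsStar s) (hw : w ∈ C) (hws : w ≠ s)
    (hne : (T.children w).Nonempty) (hrest : ¬ T.Blocked ((C.erase s).erase w)) :
    T.MatchesAny junctionForests C := by
  have hw' : w ∈ C.erase s := Finset.mem_erase.2 ⟨hws, hw⟩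
  obtain ⟨S, hS, hsS⟩ := hstar.matchesAny
  rcases List.mem_cons.1 hS with rfl | hS
  · obtain ⟨F, hF, hm⟩ := matchesAny_siblingForests (T := T) hne
    exact ⟨_, List.mem_append_left _ (List.mem_map_of_mem hF),
      hsS.cons hs (hm.cons hw' (.nil hrest))⟩
  · obtain ⟨R, hR, rfl⟩ := List.mem_map.1 hS
    obtain ⟨F, hF, hm⟩ := matchesAny_vertexForests (T := T) w
    exact ⟨_, List.mem_append_right _ (List.mem_flatMap.2 ⟨R, hR, List.mem_map_of_mem hF⟩),
      hsS.cons hs (hm.cons hw' (.nil hrest))⟩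

theorem MatchesAny.hangs (h : T.MatchesAny hangForests C) (hG : G.Connected)
    (hC : C ⊆ T.children p) (hang : ∀ v ∈ T.below C, T.HangsUnblocked v) : T.Hangs p C :=
  let ⟨F, hF, hm⟩ := h
  let ⟨hcomplete, _, _, ht⟩ := exists_isCertificate_of_mem_hangForests F hF
  hm.hangs hG hC hcomplete ht hang

theorem MatchesAny.hasWell (h : T.MatchesAny rootForests (T.children p)) (hG : G.Connected)
    (hang : ∀ v ∈ T.below {p}, T.HangsUnblocked v) : T.HasWell p :=
  let ⟨F, hF, hm⟩ := h
  let ⟨_, _, ht⟩ := exists_isCertificate_of_mem_rootForests F hF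
  hm.hasWell hG ht hang

theorem hangs_of_not_isStar (hG : G.Connected) (hC : C ⊆ T.children p) (hz : z ∈ C)
    (hstar : ¬ T.IsStar z) (hwell : T.HasWell z) (hrest : ¬ T.Blocked (C.erase z) →
      T.Hangs p (C.erase z)) (hang : ∀ v ∈ T.below C, T.HangsUnblocked v) : T.Hangs p C := by
  by_cases hblocked : T.Blocked (C.erase z)
  · obtain ⟨s, hs, hsstar⟩ := hblocked
    obtain ⟨hsz, hsC⟩ := Finset.mem_erase.1 (hs ▸ Finset.mem_singleton_self s : s ∈ C.erase z)
    have hCs : C.erase s = {z} := by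
      rw [← Finset.insert_erase hz, hs, Finset.pair_comm, Finset.erase_insert]
      simpa using hsz
    obtain ⟨S, hS, hsS⟩ := hsstar.matchesAny
    obtain ⟨N, hN, hzN⟩ := matchesAny_nonStarForests hstar
    refine MatchesAny.hangs ⟨_, List.mem_append_right _ (List.mem_flatMap.2
      ⟨S, hS, List.mem_map_of_mem hN⟩), hsS.cons hsC ?_⟩ hG hC hang
    exact hCs ▸ hzN.only
  · rw [← Finset.insert_erase hz, Finset.insert_eq]
    exact .union (Finset.singleton_subset_iff.2 (hC hz)) ((Finset.erase_subset z C).trans hC)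
      (by simp) (hwell.hangs hG (hC hz)) (hrest hblocked)

theorem matchesAny_hangForests_of_forall_isStar (h : ∀ c ∈ C, T.IsStar c) (hlow : 2 ≤ C.card)
    (hupp : C.card ≤ 3) : T.MatchesAny hangForests C := by
  have star (c) (hc : c ∈ C) := (h c hc).matchesAny
  obtain hcard | hcard : C.card = 2 ∨ C.card = 3 := by omega
  · obtain ⟨F, hF, hm⟩ := matchesAny_combinations hcard star
    exact ⟨F, List.mem_append_left _ (List.mem_append_left _ hF), hm⟩
  · obtain ⟨F, hF, hm⟩ := matchesAny_combinations hcard star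
    exact ⟨F, List.mem_append_left _ (List.mem_append_right _ hF), hm⟩

theorem matchesAny_junctionForests_of_blocked_erase (hw : w ∈ C) (hne : (T.children w).Nonempty)
    (h : T.Blocked (C.erase w)) : T.MatchesAny junctionForests C := by
  obtain ⟨s, hs, hstar⟩ := h
  obtain ⟨hsw, hsC⟩ := Finset.mem_erase.1 (hs ▸ Finset.mem_singleton_self s : s ∈ C.erase w)
  refine matchesAny_junctionForests hsC hstar hw hsw.symm hne ?_
  rw [Finset.erase_right_comm, hs, Finset.erase_singleton]
  exact not_blocked_empty

theorem matchesAny_rootForests_of_grandchild (hz : z ∈ C) (hw : w ∈ T.children z)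
    (hne : (T.children w).Nonempty) : T.MatchesAny rootForests C := by
  by_cases hCz : T.Blocked (C.erase z)
  · obtain ⟨F, hF, hm⟩ := matchesAny_junctionForests_of_blocked_erase hz ⟨w, hw⟩ hCz
    exact ⟨F, List.mem_append_left _ (List.mem_append_right _ hF), hm⟩
  by_cases hzw : T.Blocked ((T.children z).erase w)
  · obtain ⟨F, hF, hm⟩ := matchesAny_junctionForests_of_blocked_erase hw hne hzw
    exact ⟨_, List.mem_append_left _ (List.mem_append_left _ (List.mem_append_right _
      (List.mem_map_of_mem hF))), hm.cons hz (.nil hCz)⟩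
  · obtain ⟨F, hF, hm⟩ := matchesAny_siblingForests (T := T) hne
    exact ⟨_, List.mem_append_left _ (List.mem_append_left _ (List.mem_append_left _
      (List.mem_map_of_mem hF))), (hm.cons hw (.nil hzw)).cons hz (.nil hCz)⟩

theorem matchesAny_rootForests_of_forall_leaves
    (h : ∀ c ∈ C, ∀ e ∈ T.children c, T.children e = ∅) (hw : w ∈ C)
    (hne : (T.children w).Nonempty) (hs : s ∈ C) (hsw : s ≠ w) : T.MatchesAny rootForests C := by
  have hstar {c} (hc : c ∈ C) : T.IsStar c := .inl (h c hc)
  by_cases hrest : T.Blocked ((C.erase s).erase w)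
  · obtain ⟨r, hr, -⟩ := hrest
    have hcard : (C.erase w).card = 2 := by
      have hsC : s ∈ C.erase w := Finset.mem_erase.2 ⟨hsw, hs⟩
      rw [← Finset.card_erase_add_one hsC, Finset.erase_right_comm, hr, Finset.card_singleton]
    obtain ⟨F, hF, hwF⟩ := matchesAny_nonemptyLeafSetForests hne (h w hw)
    obtain ⟨H, hH, hm⟩ := matchesAny_combinations hcard fun c hc =>
      matchesAny_leafSetForests (h c (Finset.mem_of_mem_erase hc))
    exact ⟨_, List.mem_append_right _ (List.mem_flatMap.2 ⟨F, hF, List.mem_map_of_mem hH⟩),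
      hwF.cons hw hm⟩
  · obtain ⟨F, hF, hm⟩ := matchesAny_junctionForests hs (hstar hs) hw hsw.symm hne hrest
    exact ⟨F, List.mem_append_left _ (List.mem_append_right _ hF), hm⟩

theorem matchesAny_rootForests (hx : ¬ T.IsStar x) : T.MatchesAny rootForests (T.children x) := by
  by_cases hdeep : ∃ z ∈ T.children x, ∃ w ∈ T.children z, (T.children w).Nonempty
  · obtain ⟨z, hz, w, hw, hne⟩ := hdeep
    exact matchesAny_rootForests_of_grandchild hz hw hne
  have hleaves : ∀ c ∈ T.children x, ∀ e ∈ T.children c, T.children e = ∅ := fun c hc e he =>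
    Finset.not_nonempty_iff_eq_empty.1 fun hne => hdeep ⟨c, hc, e, he, hne⟩
  rw [IsStar, not_or] at hx
  push Not at hx
  obtain ⟨⟨w, hw, hne⟩, honly⟩ := hx
  obtain ⟨s, hs, hsw⟩ : ∃ s ∈ T.children x, s ≠ w := by
    by_contra! h
    obtain ⟨e, he, hne'⟩ := honly w (Finset.eq_singleton_iff_unique_mem.2 ⟨hw, h⟩)
    exact hne'.ne_empty (hleaves w hw e he)
  exact matchesAny_rootForests_of_forall_leaves hleaves hw hne hs hsw

end Rooting

end Cases

section Induction

namespace Rooting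

variable {V : Type*} {G : SimpleGraph V} {T : Rooting G} {p : V}

theorem hangsUnblocked_of_children (hG : G.Connected)
    (hwell : ∀ z ∈ T.children p, ¬ T.IsStar z → T.HasWell z)
    (hang : ∀ v ∈ T.below (T.children p), T.HangsUnblocked v) : T.HangsUnblocked p := by
  classical
  intro C hC hblocked
  induction C using Finset.strongInduction with
  | H C ih =>
    have hangC (v) (hv : v ∈ T.below C) := hang v (below_mono hC hv)
    by_cases hall : ∀ c ∈ C, T.IsStar c
    · rcases C.eq_empty_or_nonempty with rfl | hne
      · exact .empty p
      have hcard : 2 ≤ C.card := by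
        by_contra hlt
        obtain ⟨s, rfl⟩ := Finset.card_eq_one.1 (show C.card = 1 by have := hne.card_pos; omega)
        exact hblocked ⟨s, rfl, hall s (Finset.mem_singleton_self s)⟩
      by_cases hupp : C.card ≤ 3
      · exact (matchesAny_hangForests_of_forall_isStar hall hcard hupp).hangs hG hC hangC
      obtain ⟨B, hBC, hB⟩ := Finset.exists_subset_card_eq hcard
      have hCB : (C \ B).card = C.card - 2 := hB ▸ Finset.card_sdiff_of_subset hBC
      have hlt : C \ B ⊂ C := Finset.sdiff_ssubset hBC (Finset.card_pos.1 (by omega))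
      have hlt' : B ⊂ C := hBC.ssubset_of_ne (by rintro rfl; omega)
      rw [← Finset.union_sdiff_of_subset hBC]
      exact .union (hBC.trans hC) (Finset.sdiff_subset.trans hC) Finset.disjoint_sdiff
        (ih B hlt' (hBC.trans hC) (not_blocked_of_one_lt_card (by omega)))
        (ih (C \ B) hlt (Finset.sdiff_subset.trans hC) (not_blocked_of_one_lt_card (by omega)))
    · push Not at hall
      obtain ⟨z, hz, hstar⟩ := hall
      refine hangs_of_not_isStar hG hC hz hstar (hwell z (hC hz) hstar) ?_ hangC
      exact ih _ (Finset.erase_ssubset hz) ((Finset.erase_subset z C).trans hC)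

theorem hangsUnblocked_and_hasWell [Finite V] (hG : G.Connected) (v : V) :
    T.HangsUnblocked v ∧ (¬ T.IsStar v → T.HasWell v) := by
  classical
  have : IsTrans V fun a b => T.depth b < T.depth a := ⟨fun _ _ _ h h' => h'.trans h⟩
  have : Std.Irrefl fun a b => T.depth b < T.depth a := ⟨fun _ => lt_irrefl _⟩
  induction v using
    (Finite.wellFounded_of_trans_of_irrefl fun a b => T.depth b < T.depth a).induction with
  | _ v ih =>
    have below (w) (hw : w ∈ T.below (T.children v)) := ih w (T.depth_lt_of_mem_below_children hw)
    have hang : T.HangsUnblocked v := hangsUnblocked_of_children hG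
      (fun z hz => (below z (subset_below _ hz)).2) fun w hw => (below w hw).1
    refine ⟨hang, fun hv => (matchesAny_rootForests hv).hasWell hG ?_⟩
    rw [below_singleton_eq, Set.forall_mem_insert]
    exact ⟨hang, fun w hw => (below w hw).1⟩

end Rooting

end Induction

theorem stmt13_general {V : Type*} [Fintype V] [DecidableEq V] (G : SimpleGraph V)
    (hG : IsNonStarTree G) (x : V) :
    ∃ σ : Equiv.Perm V,
      (∀ v, σ v ≠ v) ∧
      (∀ u v, G.Adj u v → ¬ G.Adj (σ u) (σ v)) ∧
      (∀ u v, G.Adj u v → G.dist (σ u) (σ v) ≤ 6) ∧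
      G.dist x (σ x) ≤ 2 ∧
      (∀ y, G.Adj x y → G.dist y (σ y) ≤ 3) ∧
      (∀ y, G.dist y (σ y) ≤ 4) ∧
      (∀ v, (σ.cycleOf v).support.card ≤ 5) := by
  obtain ⟨htree, hstar⟩ := hG
  have hconn := htree.connected
  obtain ⟨T, hx⟩ := exists_rooting_of_isTree htree x
  obtain ⟨σ, hσ, hdist, hchild⟩ := (T.hangsUnblocked_and_hasWell hconn x).2 fun h =>
    hstar (h.exists_forall_adj hconn hx)
  rw [Rooting.below_singleton_eq_univ hconn hx] at hσ
  exact ⟨σ, fun v => (hσ.apply_ne_iff v).2 trivial, fun _ _ => hσ.not_adj trivial trivial,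
    fun _ _ => hσ.dist_edge_le trivial trivial, hdist,
    fun y hy => hchild y (Rooting.mem_children_of_adj hx hy), hσ.dist_le,
    hσ.card_support_cycleOf_le⟩

/-- every non-star tree T and vertex x admit a (T,x)-well 2-placement. -/
theorem stmt13 {V : Type*} [Fintype V] [DecidableEq V] (G : SimpleGraph V)
    (hG : IsNonStarTree G) (x : V) :
    ∃ σ : Equiv.Perm V,
      (∀ v, σ v ≠ v) ∧
      (∀ u v, G.Adj u v → ¬ G.Adj (σ u) (σ v)) ∧
      (∀ u v, G.Adj u v → G.dist (σ u) (σ v) ≤ 6) ∧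
      G.dist x (σ x) ≤ 2 ∧
      (∀ y, G.Adj x y → G.dist y (σ y) ≤ 3) ∧
      (∀ y, (∃! w, G.Adj y w) → G.dist y (σ y) ≤ 4) ∧
      (∀ v, (σ.cycleOf v).support.card ≤ 5) := by
  obtain ⟨σ, hne, hadj, hedge, hx, hnbr, hdist, hcycle⟩ := stmt13_general G hG x
  exact ⟨σ, hne, hadj, hedge, hx, hnbr, fun y _ => hdist y, hcycle⟩
end
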